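/- arXiv:2501.04852 — 4 statements merged into one kernel-verified Lean document; each statement's English description precedes it below -/
import Mathlib

section
/- For every ideal C of 𝓡 and every index 0 ≤ i ≤ 2, the torsion degrees satisfy T_i(C⊥) = T_i(𝒜(C)) = 2^s − T_{2−i}(C). -/
noncomputable section

open Polynomial

/-- The finite field `GF(2^m)`. -/
abbrev Fq (m : ℕ) : Type := GaloisField 2 m

/-- The ring `R₃ = F[u]/⟨u³⟩`. -/
abbrev R3 (m : ℕ) : Type := AdjoinRoot (X ^ 3 : (Fq m)[X])

/-- The polynomial `x^{2^s} + 1` over `R₃`. -/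
abbrev gR (m s : ℕ) : (R3 m)[X] := X ^ (2 ^ s) + 1

/-- The polynomial `x^{2^s} + 1` over `F`. -/
abbrev gK (m s : ℕ) : (Fq m)[X] := X ^ (2 ^ s) + 1

/-- The ring `𝓡 = R₃[x]/⟨x^{2^s}+1⟩`. -/
abbrev RR (m s : ℕ) : Type := AdjoinRoot (gR m s)

/-- The ring `𝓚 = F[x]/⟨x^{2^s}+1⟩`. -/
abbrev KK (m s : ℕ) : Type := AdjoinRoot (gK m s)

/-- The element `u` of `R₃`. -/
def uu (m : ℕ) : R3 m := AdjoinRoot.root _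

/-- The element `u` of `𝓡`. -/
def uR (m s : ℕ) : RR m s := algebraMap (R3 m) (RR m s) (uu m)

/-- The element `x` of `𝓡`. -/
def xR (m s : ℕ) : RR m s := AdjoinRoot.root _

/-- The element `x` of `𝓚`. -/
def xK (m s : ℕ) : KK m s := AdjoinRoot.root _

lemma gR_monic (m s : ℕ) : (gR m s).Monic := by
  have h : (gR m s) = X ^ (2 ^ s) + C 1 := by simp [gR]
  rw [h]; exact monic_X_pow_add_C _ (by positivity)

lemma gK_monic (m s : ℕ) : (gK m s).Monic := by
  have h : (gK m s) = X ^ (2 ^ s) + C 1 := by simp [gK]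
  rw [h]; exact monic_X_pow_add_C _ (by positivity)

/-- The standard representative (of degree `< 2^s`) of an element of `𝓡`. -/
def repR (m s : ℕ) (c : RR m s) : (R3 m)[X] := AdjoinRoot.modByMonicHom (gR_monic m s) c

/-- The standard representative (of degree `< 2^s`) of an element of `𝓚`. -/
def repK (m s : ℕ) (c : KK m s) : (Fq m)[X] := AdjoinRoot.modByMonicHom (gK_monic m s) c

/-- The `j`-th coefficient of the standard representative of `c ∈ 𝓡`. -/
def coeffR (m s : ℕ) (c : RR m s) (j : ℕ) : R3 m := (repR m s c).coeff j

/-- The dot product on `𝓡`. -/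
def dotR (m s : ℕ) (c d : RR m s) : R3 m :=
  ∑ j ∈ Finset.range (2 ^ s), coeffR m s c j * coeffR m s d j

/-- The dual of a set of codewords. -/
def dualSet (m s : ℕ) (S : Set (RR m s)) : Set (RR m s) :=
  {c | ∀ d ∈ S, dotR m s c d = 0}

/-- A cyclic code (ideal of `𝓡`) is self-dual if it coincides with its dual. -/
def IsSelfDual (m s : ℕ) (C : Ideal (RR m s)) : Prop :=
  (C : Set (RR m s)) = dualSet m s (C : Set (RR m s))

/-- The annihilator of a set of codewords. -/
def annSet (m s : ℕ) (S : Set (RR m s)) : Set (RR m s) :=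
  {c | ∀ d ∈ S, c * d = 0}

/-- The reciprocal `c*(x) = x^{deg c} c(x⁻¹)` of an element of `𝓡`. -/
def recip (m s : ℕ) (c : RR m s) : RR m s :=
  xR m s ^ (repR m s c).natDegree *
    Polynomial.aeval (Ring.inverse (xR m s)) (repR m s c)

/-- Reduction `R₃ → F` modulo `u`. -/
def epsR3 (m : ℕ) : R3 m →+* Fq m :=
  AdjoinRoot.lift (RingHom.id (Fq m)) 0 (by simp)

lemma xK_pow_add_one (m s : ℕ) : (xK m s) ^ (2 ^ s) + 1 = 0 := by
  have h := AdjoinRoot.eval₂_root (gK m s)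
  simpa [gK, xK] using h

lemma xR_pow_add_one (m s : ℕ) : (xR m s) ^ (2 ^ s) + 1 = 0 := by
  have h := AdjoinRoot.eval₂_root (gR m s)
  simpa [gR, xR] using h

/-- Reduction `μ : 𝓡 → 𝓚` modulo `u`. -/
def muRK (m s : ℕ) : RR m s →+* KK m s :=
  AdjoinRoot.lift ((algebraMap (Fq m) (KK m s)).comp (epsR3 m)) (xK m s) (by
    simp only [gR, eval₂_add, eval₂_pow, eval₂_X, eval₂_one]
    exact xK_pow_add_one m s)

/-- The natural inclusion `𝓚 → 𝓡`. -/
def KtoR (m s : ℕ) : KK m s →+* RR m s :=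
  AdjoinRoot.lift ((algebraMap (R3 m) (RR m s)).comp (algebraMap (Fq m) (R3 m))) (xR m s) (by
    simp only [gK, eval₂_add, eval₂_pow, eval₂_X, eval₂_one]
    exact xR_pow_add_one m s)

/-- The `i`-th torsion code of a set `S ⊆ 𝓡`. -/
def TorSet (m s : ℕ) (S : Set (RR m s)) (i : ℕ) : Set (KK m s) :=
  muRK m s '' {f | (uR m s) ^ i * f ∈ S}

/-- The torsion degree `T_i`: the (unique) `k` with `Tor_i = ⟨(x+1)^k⟩`. -/
def Tdeg (m s : ℕ) (S : Set (RR m s)) (i : ℕ) : ℕ :=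
  sInf {k | TorSet m s S i =
    ((Ideal.span {(xK m s + 1) ^ k} : Ideal (KK m s)) : Set (KK m s))}

/-- Substitution `h(x) ↦ h(x⁻¹)` on `𝓚`. -/
def invSub (m s : ℕ) (h : KK m s) : KK m s :=
  Polynomial.aeval (Ring.inverse (xK m s)) (repK m s h)


/-!
In `𝓡` the annihilator of `u ^ j` is `⟨u ^ (3 - j)⟩`, and `ker μ = ⟨u⟩` is the annihilator of
`u ^ 2`. So, for `i ≤ 2`, the product `(u ^ i * a) * (u ^ (2 - i) * c)` vanishes exactly when
`μ a * μ c = 0`; that is, `μ a` annihilates `Tor_{2-i}(C)` if and only if `u ^ i * a` annihilates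
`C ∩ ⟨u ^ (2 - i)⟩`. The coefficient of `u ^ 2 x ^ 0` is a Frobenius form, so the annihilator of
this intersection is `𝒜(C) + ⟨u ^ (i + 1)⟩`, and correcting `a` by a multiple of `u` moves
`u ^ i * a` into `𝒜(C)`. Hence `Tor_i(𝒜(C))` is the annihilator of `Tor_{2-i}(C)`; as `𝓚` is the
quotient of `F[x]` by `(x + 1) ^ 2 ^ s`, the two exponents add up to `2 ^ s`.

Finally, `c · d` is the constant coefficient of `c(x⁻¹) d(x)`, so `C⊥` is the image of `𝒜(C)` under
`x ↦ x⁻¹`, a substitution which fixes every ideal of `𝓚`. The argument works verbatim for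
negacyclic codes of length `p ^ s` in characteristic `p` with `u ^ (n + 1) = 0`.
-/

section FrobeniusForm

variable {R S A : Type*} [CommRing R] [CommRing S] [CommRing A] [Algebra S A]

/-- A Frobenius form on a commutative `S`-algebra `A`: a linear functional whose kernel contains no
nonzero ideal of `A`, equivalently one for which `(a, b) ↦ ψ (a * b)` is nondegenerate. -/
def IsFrobeniusForm (ψ : A →ₗ[S] S) : Prop :=
  ∀ a, (∀ b, ψ (a * b) = 0) → a = 0

namespace IsFrobeniusForm

theorem comp [Algebra R S] [Algebra R A] [IsScalarTower R S A] {φ : S →ₗ[R] R} {ψ : A →ₗ[S] S}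
    (hφ : IsFrobeniusForm φ) (hψ : IsFrobeniusForm ψ) :
    IsFrobeniusForm (φ ∘ₗ ψ.restrictScalars R) := by
  intro a ha
  refine hψ a fun b => hφ _ fun t => ?_
  have h := ha (t • b)
  rwa [mul_smul_comm, LinearMap.comp_apply, LinearMap.restrictScalars_apply, map_smul, smul_eq_mul,
    mul_comm] at h

variable {F : Type*} [Field F] [Algebra F A] {ψ : A →ₗ[F] F}

theorem injective_mul_compr₂ (hψ : IsFrobeniusForm ψ) :
    Function.Injective ((LinearMap.mul F A).compr₂ ψ) :=
  (injective_iff_map_eq_zero _).mpr fun a ha => hψ a fun b => LinearMap.congr_fun ha b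

theorem surjective_mul_compr₂ [Module.Finite F A] (hψ : IsFrobeniusForm ψ) :
    Function.Surjective ((LinearMap.mul F A).compr₂ ψ) :=
  (LinearMap.injective_iff_surjective_of_finrank_eq_finrank
    Subspace.dual_finrank_eq.symm).mp hψ.injective_mul_compr₂

theorem mem_annihilator_iff (hψ : IsFrobeniusForm ψ) {I : Ideal A} {a : A} :
    a ∈ I.annihilator ↔
      (LinearMap.mul F A).compr₂ ψ a ∈ (I.restrictScalars F).dualAnnihilator := by
  simp only [Submodule.mem_annihilator, Submodule.mem_dualAnnihilator, smul_eq_mul,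
    LinearMap.compr₂_apply, LinearMap.mul_apply', Submodule.restrictScalars_mem]
  refine ⟨fun h b hb => by rw [h b hb, map_zero], fun h b hb => hψ _ fun d => ?_⟩
  rw [mul_assoc]
  exact h _ (I.mul_mem_right d hb)

theorem annihilator_inf [Module.Finite F A] (hψ : IsFrobeniusForm ψ) (I J : Ideal A) :
    (I ⊓ J).annihilator = I.annihilator ⊔ J.annihilator := by
  refine le_antisymm (fun a ha => ?_)
    (sup_le (Submodule.annihilator_mono inf_le_left) (Submodule.annihilator_mono inf_le_right))
  have hdual := hψ.mem_annihilator_iff.mp ha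
  have hinf : (I ⊓ J).restrictScalars F = I.restrictScalars F ⊓ J.restrictScalars F := rfl
  rw [hinf, Subspace.dualAnnihilator_inf_eq, Submodule.mem_sup] at hdual
  obtain ⟨p, hp, q, hq, hpq⟩ := hdual
  obtain ⟨b, rfl⟩ := hψ.surjective_mul_compr₂ p
  obtain ⟨c, rfl⟩ := hψ.surjective_mul_compr₂ q
  have habc : a = b + c := hψ.injective_mul_compr₂ (by rw [map_add, hpq])
  rw [habc]
  exact Submodule.add_mem_sup (hψ.mem_annihilator_iff.mpr hp) (hψ.mem_annihilator_iff.mpr hq)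

end IsFrobeniusForm

end FrobeniusForm

section PrimePowerQuotient

variable {R K : Type*} [CommRing R] [CommRing K] {f : R →+* K} {ϖ : R} {N k : ℕ}

theorem map_pow_dvd_map_iff (hf : Function.Surjective f) (hker : RingHom.ker f = Ideal.span {ϖ ^ N})
    (hk : k ≤ N) {a : R} : f ϖ ^ k ∣ f a ↔ ϖ ^ k ∣ a := by
  refine ⟨?_, fun h => map_pow f ϖ k ▸ map_dvd f h⟩
  rintro ⟨b, hb⟩
  obtain ⟨b, rfl⟩ := hf b
  have hmem : a - ϖ ^ k * b ∈ RingHom.ker f := by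
    rw [RingHom.mem_ker, map_sub, map_mul, map_pow, hb, sub_self]
  rw [hker, Ideal.mem_span_singleton] at hmem
  exact (dvd_sub_left (dvd_mul_right _ _)).mp ((pow_dvd_pow ϖ hk).trans hmem)

theorem map_pow_mul_eq_zero_iff [IsDomain R] (hf : Function.Surjective f)
    (hker : RingHom.ker f = Ideal.span {ϖ ^ N}) (hϖ : ϖ ≠ 0) (hk : k ≤ N) {b : K} :
    f ϖ ^ k * b = 0 ↔ f ϖ ^ (N - k) ∣ b := by
  obtain ⟨a, rfl⟩ := hf b
  rw [map_pow_dvd_map_iff hf hker (Nat.sub_le N k), ← map_pow, ← map_mul, ← RingHom.mem_ker, hker,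
    Ideal.mem_span_singleton, ← Nat.add_sub_of_le hk, pow_add, Nat.add_sub_cancel_left,
    mul_dvd_mul_iff_left (pow_ne_zero k hϖ)]

theorem annihilator_span_map_pow [IsDomain R] (hf : Function.Surjective f)
    (hker : RingHom.ker f = Ideal.span {ϖ ^ N}) (hϖ : ϖ ≠ 0) (hk : k ≤ N) :
    (Ideal.span {f ϖ ^ k}).annihilator = Ideal.span {f ϖ ^ (N - k)} := by
  ext b
  rw [Submodule.mem_annihilator_span_singleton, smul_eq_mul, mul_comm,
    map_pow_mul_eq_zero_iff hf hker hϖ hk, Ideal.mem_span_singleton]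

theorem exists_eq_span_map_pow [IsDomain R] [IsPrincipalIdealRing R] (hf : Function.Surjective f)
    (hker : RingHom.ker f = Ideal.span {ϖ ^ N}) (hϖ : Prime ϖ) (I : Ideal K) :
    ∃ k ≤ N, I = Ideal.span {f ϖ ^ k} := by
  obtain ⟨g, hg⟩ := IsPrincipalIdealRing.principal (I.comap f)
  have hdvd : g ∣ ϖ ^ N := by
    rw [← Ideal.mem_span_singleton, ← Ideal.submodule_span_eq, ← hg, Ideal.mem_comap,
      RingHom.mem_ker.mp (hker ▸ Ideal.mem_span_singleton_self _)]
    exact I.zero_mem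
  obtain ⟨k, hk, hassoc⟩ := (dvd_prime_pow hϖ N).mp hdvd
  refine ⟨k, hk, ?_⟩
  rw [← Ideal.map_comap_of_surjective f hf I, hg, Ideal.submodule_span_eq,
    Ideal.span_singleton_eq_span_singleton.mpr hassoc, Ideal.map_span, Set.image_singleton, map_pow]

/-- The exponent of an ideal with respect to `ϖ`: the least `k` such that the ideal is generated
by `ϖ ^ k`, and `0` if there is no such `k`. -/
def spanExponent (ϖ : K) (I : Ideal K) : ℕ :=
  sInf {k | I = Ideal.span {ϖ ^ k}}

theorem spanExponent_span_map_pow [IsDomain R] (hf : Function.Surjective f)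
    (hker : RingHom.ker f = Ideal.span {ϖ ^ N}) (hϖ : Prime ϖ) (hk : k ≤ N) :
    spanExponent (f ϖ) (Ideal.span {f ϖ ^ k}) = k := by
  refine le_antisymm (Nat.sInf_le rfl) (le_csInf ⟨k, rfl⟩ fun l hl => ?_)
  have hmem : f ϖ ^ l ∈ Ideal.span {f ϖ ^ k} := by
    rw [Set.mem_ofPred_eq.mp hl]
    exact Ideal.mem_span_singleton_self _
  rw [Ideal.mem_span_singleton, ← map_pow f ϖ l, map_pow_dvd_map_iff hf hker hk] at hmem
  exact (pow_dvd_pow_iff hϖ.ne_zero hϖ.not_isUnit).mp hmem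

theorem spanExponent_annihilator [IsDomain R] [IsPrincipalIdealRing R] (hf : Function.Surjective f)
    (hker : RingHom.ker f = Ideal.span {ϖ ^ N}) (hϖ : Prime ϖ) (I : Ideal K) :
    spanExponent (f ϖ) I.annihilator = N - spanExponent (f ϖ) I := by
  obtain ⟨k, hk, rfl⟩ := exists_eq_span_map_pow hf hker hϖ I
  rw [annihilator_span_map_pow hf hker hϖ.ne_zero hk,
    spanExponent_span_map_pow hf hker hϖ (Nat.sub_le N k),
    spanExponent_span_map_pow hf hker hϖ hk]

end PrimePowerQuotient

section Torsion

variable {A B : Type*} [CommRing A] [CommRing B] {μ : A →+* B} {u : A}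

/-- The `i`-th torsion code of `C` with respect to `u` and the reduction map `μ`: the image under
`μ` of `{a | u ^ i * a ∈ C}`. -/
def torsion (μ : A →+* B) (u : A) (C : Ideal A) (i : ℕ) : Ideal B :=
  (C.colon {u ^ i}).map μ

theorem mem_torsion (hμ : Function.Surjective μ) {C : Ideal A} {i : ℕ} {b : B} :
    b ∈ torsion μ u C i ↔ ∃ a, u ^ i * a ∈ C ∧ μ a = b := by
  simp only [torsion, Ideal.mem_map_iff_of_surjective μ hμ, Submodule.mem_colon_singleton,
    smul_eq_mul, mul_comm (u ^ i)]

theorem torsion_comap (hμ : Function.Surjective μ) {σ : A ≃+* A} {τ : B ≃+* B}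
    (hcomm : ∀ a, μ (σ a) = τ (μ a)) (hu : σ u = u) (C : Ideal A) (i : ℕ) :
    torsion μ u (C.comap σ) i = (torsion μ u C i).comap τ := by
  ext b
  simp only [Ideal.mem_comap, mem_torsion hμ, map_mul, map_pow, hu]
  constructor
  · rintro ⟨a, ha, rfl⟩
    exact ⟨σ a, ha, hcomm a⟩
  · rintro ⟨a, ha, hab⟩
    refine ⟨σ.symm a, by rwa [σ.apply_symm_apply], τ.injective ?_⟩
    rw [← hcomm, σ.apply_symm_apply, hab]

theorem torsion_annihilator {n i : ℕ} (hμ : Function.Surjective μ)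
    (hker : RingHom.ker μ = Ideal.span {u})
    (hu : ∀ j ≤ n + 1, ∀ a, u ^ j * a = 0 ↔ u ^ (n + 1 - j) ∣ a)
    (hinf : ∀ I J : Ideal A, (I ⊓ J).annihilator = I.annihilator ⊔ J.annihilator)
    (C : Ideal A) (hi : i ≤ n) :
    torsion μ u C.annihilator i = (torsion μ u C (n - i)).annihilator := by
  have hprod (a c : A) : u ^ i * a * (u ^ (n - i) * c) = 0 ↔ μ a * μ c = 0 := by
    rw [mul_mul_mul_comm, ← pow_add, Nat.add_sub_of_le hi, hu n n.le_succ, Nat.add_sub_cancel_left,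
      pow_one, ← map_mul, ← RingHom.mem_ker, hker, Ideal.mem_span_singleton]
  ext b
  rw [mem_torsion hμ]
  constructor
  · rintro ⟨a, ha, rfl⟩
    refine Submodule.mem_annihilator.mpr fun d hd => ?_
    obtain ⟨c, hc, rfl⟩ := (mem_torsion hμ).mp hd
    exact (hprod a c).mp (Submodule.mem_annihilator.mp ha _ hc)
  · intro hb
    obtain ⟨a, rfl⟩ := hμ b
    have ha : u ^ i * a ∈ (C ⊓ Ideal.span {u ^ (n - i)}).annihilator := by
      refine Submodule.mem_annihilator.mpr fun y hy => ?_
      obtain ⟨c, rfl⟩ := Ideal.mem_span_singleton.mp hy.2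
      have hc : μ c ∈ torsion μ u C (n - i) := (mem_torsion hμ).mpr ⟨c, hy.1, rfl⟩
      exact (hprod a c).mpr (Submodule.mem_annihilator.mp hb _ hc)
    obtain ⟨α, hα, β, hβ, hsum⟩ := Submodule.mem_sup.mp (hinf _ _ ▸ ha)
    rw [Submodule.mem_annihilator_span_singleton, smul_eq_mul, mul_comm, hu _ (by omega),
      show n + 1 - (n - i) = i + 1 by omega] at hβ
    obtain ⟨t, rfl⟩ := hβ
    have hμu : μ u = 0 := RingHom.mem_ker.mp (hker ▸ Ideal.mem_span_singleton_self u)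
    refine ⟨a - u * t, ?_, by rw [map_sub, map_mul, hμu, zero_mul, sub_zero]⟩
    rwa [mul_sub, ← hsum, ← mul_assoc, ← pow_succ, add_sub_cancel_right]

end Torsion

section BaseChange

theorem algebraMap_mul_eq_zero_iff_dvd {S A : Type*} [CommRing S] [CommRing A] [Algebra S A]
    [Module.Free S A] {a b : S} (hab : ∀ r, a * r = 0 ↔ b ∣ r) (c : A) :
    algebraMap S A a * c = 0 ↔ algebraMap S A b ∣ c := by
  constructor
  · intro hc
    let B := Module.Free.chooseBasis S A
    rw [← B.linearCombination_repr c, Finsupp.linearCombination_apply]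
    refine Finset.dvd_sum fun i _ => ?_
    obtain ⟨r, hr⟩ : b ∣ B.repr c i := by
      rw [← hab, ← smul_eq_mul, ← Finsupp.smul_apply, ← map_smul, Algebra.smul_def, hc, map_zero,
        Finsupp.zero_apply]
    simp only [hr, mul_smul, Algebra.smul_def b]
    exact dvd_mul_right _ _
  · rintro ⟨d, rfl⟩
    rw [← mul_assoc, ← map_mul, (hab b).mpr dvd_rfl, map_zero, zero_mul]

variable {S T : Type*} [CommRing S] [CommRing T] {φ : S →+* T} {p : S[X]} {q : T[X]}

theorem adjoinRoot_map_mk (h : q ∣ p.map φ) (f : S[X]) :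
    AdjoinRoot.map φ p q h (AdjoinRoot.mk p f) = AdjoinRoot.mk q (f.map φ) := by
  rw [AdjoinRoot.map, AdjoinRoot.lift_mk, ← eval₂_map, ← AdjoinRoot.aeval_eq]
  rfl

theorem adjoinRoot_map_surjective (hφ : Function.Surjective φ) (h : q ∣ p.map φ) :
    Function.Surjective (AdjoinRoot.map φ p q h) := by
  intro b
  obtain ⟨f, rfl⟩ := AdjoinRoot.mk_surjective b
  obtain ⟨f, rfl⟩ := Polynomial.map_surjective φ hφ f
  exact ⟨AdjoinRoot.mk p f, adjoinRoot_map_mk h f⟩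

theorem ker_adjoinRoot_map (hφ : Function.Surjective φ) (h : Associated q (p.map φ)) :
    RingHom.ker (AdjoinRoot.map φ p q h.dvd) = (RingHom.ker φ).map (AdjoinRoot.of p) := by
  refine le_antisymm (fun a ha => ?_) (Ideal.map_le_iff_le_comap.mpr fun r hr => ?_)
  · obtain ⟨f, rfl⟩ := AdjoinRoot.mk_surjective a
    rw [RingHom.mem_ker, adjoinRoot_map_mk, AdjoinRoot.mk_eq_zero, h.dvd_iff_dvd_left] at ha
    obtain ⟨g, hg⟩ := ha
    obtain ⟨g, rfl⟩ := Polynomial.map_surjective φ hφ g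
    have hmem : f - p * g ∈ (RingHom.ker φ).map C := by
      rw [← ker_mapRingHom, RingHom.mem_ker, coe_mapRingHom, Polynomial.map_sub, hg,
        Polynomial.map_mul, sub_self]
    have hmk := Ideal.mem_map_of_mem (AdjoinRoot.mk p) hmem
    rwa [Ideal.map_map, map_sub, map_mul, AdjoinRoot.mk_self, zero_mul, sub_zero] at hmk
  · rw [Ideal.mem_comap, RingHom.mem_ker, AdjoinRoot.map_of, RingHom.mem_ker.mp hr, map_zero]

end BaseChange

/-- The truncated polynomial ring `F[u]/⟨u ^ (n + 1)⟩`, so that `n` is the largest exponent with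
`u ^ n ≠ 0`; `R₃` is the case `n = 2`. -/
abbrev Truncated (F : Type*) [Field F] (n : ℕ) : Type _ :=
  AdjoinRoot (X ^ (n + 1) : F[X])

namespace Truncated

variable (F : Type*) [Field F] (n : ℕ)

/-- The class of the variable `u`. -/
def u : Truncated F n :=
  AdjoinRoot.root _

/-- Reduction modulo `u`. -/
def residue : Truncated F n →+* F :=
  AdjoinRoot.lift (RingHom.id F) 0 (by simp)

/-- The coefficient of `u ^ n`, which is a Frobenius form. -/
def topCoeff : Truncated F n →ₗ[F] F :=
  lcoeff F n ∘ₗ AdjoinRoot.modByMonicHom (monic_X_pow (n + 1))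

theorem residue_surjective : Function.Surjective (residue F n) := fun a =>
  ⟨AdjoinRoot.of _ a, AdjoinRoot.lift_of _⟩

theorem ker_residue : RingHom.ker (residue F n) = Ideal.span {u F n} := by
  ext r
  obtain ⟨p, rfl⟩ := AdjoinRoot.mk_surjective r
  have heval : residue F n (AdjoinRoot.mk _ p) = p.eval 0 := AdjoinRoot.lift_mk _ p
  have hdvd : u F n ∣ AdjoinRoot.mk _ p ↔ X ∣ p := by
    simpa only [pow_one] using! map_pow_dvd_map_iff (k := 1) AdjoinRoot.mk_surjective
      Ideal.mk_ker (Nat.le_add_left 1 n)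
  rw [RingHom.mem_ker, heval, ← coeff_zero_eq_eval_zero, ← X_dvd_iff, Ideal.mem_span_singleton,
    hdvd]

variable {F n}

theorem u_pow_mul_eq_zero_iff {j : ℕ} (hj : j ≤ n + 1) (r : Truncated F n) :
    u F n ^ j * r = 0 ↔ u F n ^ (n + 1 - j) ∣ r :=
  map_pow_mul_eq_zero_iff AdjoinRoot.mk_surjective Ideal.mk_ker X_ne_zero hj

theorem topCoeff_mk (p : F[X]) : topCoeff F n (AdjoinRoot.mk _ p) = p.coeff n := by
  conv_rhs => rw [← modByMonic_add_div p (X ^ (n + 1)), coeff_add, coeff_X_pow_mul',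
    if_neg n.lt_succ_self.not_ge, add_zero]
  rfl

theorem isFrobeniusForm_topCoeff : IsFrobeniusForm (topCoeff F n) := by
  intro r hr
  obtain ⟨p, rfl⟩ := AdjoinRoot.mk_surjective r
  rw [AdjoinRoot.mk_eq_zero, X_pow_dvd_iff]
  intro d hd
  have h := hr (AdjoinRoot.mk _ (X ^ (n - d)))
  rwa [← map_mul, topCoeff_mk, coeff_mul_X_pow', if_pos (Nat.sub_le n d),
    Nat.sub_sub_self (Nat.lt_succ_iff.mp hd)] at h

end Truncated

/-- The ring `S[x]/⟨x ^ N + 1⟩`, whose ideals are the negacyclic codes of length `N` over `S`. -/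
abbrev Negacyclic (S : Type*) [CommRing S] (N : ℕ) : Type _ :=
  AdjoinRoot (X ^ N + 1 : S[X])

namespace Negacyclic

section Inversion

variable (S : Type*) [CommRing S] (N : ℕ)

theorem root_pow : AdjoinRoot.root (X ^ N + 1 : S[X]) ^ N = -1 := by
  have h := AdjoinRoot.eval₂_root (X ^ N + 1 : S[X])
  rw [eval₂_add, eval₂_pow, eval₂_X, eval₂_one] at h
  exact eq_neg_of_add_eq_zero_left h

variable [NeZero N]

/-- The class of the variable `x`, as a unit. -/
def x : (Negacyclic S N)ˣ :=
  Units.mkOfMulEqOne (AdjoinRoot.root _) (-(AdjoinRoot.root _) ^ (N - 1)) (by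
    rw [mul_neg, mul_pow_sub_one (NeZero.ne N), root_pow, neg_neg])

theorem x_pow : x S N ^ N = -1 :=
  Units.ext (root_pow S N)

theorem x_inv_pow : (x S N)⁻¹ ^ N = -1 := by
  rw [inv_pow, x_pow]
  exact inv_eq_of_mul_eq_one_right (by rw [neg_mul_neg, one_mul])

/-- The substitution `x ↦ x⁻¹`, as an algebra homomorphism. -/
def inversionHom : Negacyclic S N →ₐ[S] Negacyclic S N :=
  AdjoinRoot.liftAlgHom _ (Algebra.ofId S _) ((x S N)⁻¹ : (Negacyclic S N)ˣ) (by
    rw [eval₂_add, eval₂_pow, eval₂_X, eval₂_one, ← Units.val_pow_eq_pow_val, x_inv_pow,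
      Units.val_neg, Units.val_one, neg_add_cancel])

theorem inversionHom_x : inversionHom S N (x S N) = ((x S N)⁻¹ : (Negacyclic S N)ˣ) :=
  AdjoinRoot.liftAlgHom_root _ _ _ _

theorem inversionHom_x_inv : inversionHom S N ((x S N)⁻¹ : (Negacyclic S N)ˣ) = x S N := by
  have h := map_mul (inversionHom S N) (x S N : Negacyclic S N) ((x S N)⁻¹ : (Negacyclic S N)ˣ)
  rw [Units.mul_inv, map_one, inversionHom_x] at h
  rw [← Units.mul_right_inj (x S N)⁻¹, Units.inv_mul]
  exact h.symm

theorem inversionHom_comp_self : (inversionHom S N).comp (inversionHom S N) = AlgHom.id S _ :=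
  AdjoinRoot.algHom_ext ((congrArg _ (inversionHom_x S N)).trans (inversionHom_x_inv S N))

/-- The substitution `x ↦ x⁻¹`, which plays the role of the reciprocal of a polynomial. -/
def inversion : Negacyclic S N ≃ₐ[S] Negacyclic S N :=
  AlgEquiv.ofAlgHom (inversionHom S N) (inversionHom S N)
    (inversionHom_comp_self S N) (inversionHom_comp_self S N)

variable {S N}

theorem inversion_x : inversion S N (x S N) = ((x S N)⁻¹ : (Negacyclic S N)ˣ) :=
  inversionHom_x S N

theorem inversion_inversion (c : Negacyclic S N) : inversion S N (inversion S N c) = c :=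
  (inversion S N).symm_apply_apply c

end Inversion

section Dual

variable {S : Type*} [CommRing S] {N : ℕ} [NeZero N]

theorem monic (S : Type*) [CommRing S] (N : ℕ) [NeZero N] : (X ^ N + 1 : S[X]).Monic :=
  monic_X_pow_add_C 1 (NeZero.ne N)

instance : Module.Free S (Negacyclic S N) :=
  (monic S N).free_adjoinRoot

instance : Module.Finite S (Negacyclic S N) :=
  (monic S N).finite_adjoinRoot

/-- The `j`-th coefficient of the representative of degree less than `N`. -/
def coeff (j : ℕ) : Negacyclic S N →ₗ[S] S :=
  lcoeff S j ∘ₗ AdjoinRoot.modByMonicHom (monic S N)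

theorem sum_coeff_smul_x_pow (c : Negacyclic S N) :
    ∑ j ∈ Finset.range N, coeff j c • (x S N : Negacyclic S N) ^ j = c := by
  obtain ⟨p, rfl⟩ := AdjoinRoot.mk_surjective c
  have hdeg : (X ^ N + 1 : S[X]).degree ≤ N :=
    (degree_add_le _ _).trans (max_le (degree_X_pow_le N) (degree_one_le.trans (Nat.cast_nonneg N)))
  have hmod : AdjoinRoot.mk (X ^ N + 1 : S[X]) (p %ₘ (X ^ N + 1)) = AdjoinRoot.mk _ p :=
    AdjoinRoot.mk_leftInverse (monic S N) (AdjoinRoot.mk _ p)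
  conv_rhs => rw [← hmod, ← sum_modByMonic_coeff (monic S N) hdeg, map_sum]
  rw [Finset.sum_range]
  refine Finset.sum_congr rfl fun j _ => ?_
  rw [← C_mul_X_pow_eq_monomial, map_mul, map_pow, Algebra.smul_def]
  rfl

theorem coeff_x_pow {j : ℕ} (hj : j < N) (k : ℕ) :
    coeff k ((x S N : Negacyclic S N) ^ j) = if k = j then 1 else 0 := by
  nontriviality S
  have hdeg : (X ^ N + 1 : S[X]).degree = N := degree_X_pow_add_C (NeZero.pos N) 1
  have hmod : (X ^ j : S[X]) %ₘ (X ^ N + 1) = X ^ j := by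
    rw [modByMonic_eq_self_iff (monic S N), degree_X_pow, hdeg]
    exact_mod_cast hj
  have hx : (x S N : Negacyclic S N) ^ j = AdjoinRoot.mk _ (X ^ j) := (map_pow _ _ _).symm
  rw [coeff, LinearMap.comp_apply, hx, AdjoinRoot.modByMonicHom_mk, hmod, lcoeff_apply, coeff_X_pow]

theorem coeff_zero_x_inv_pow_mul_x_pow {j k : ℕ} (hj : j < N) (hk : k < N) :
    coeff 0 (((x S N)⁻¹ ^ j * x S N ^ k : (Negacyclic S N)ˣ) : Negacyclic S N) =
      if k = j then 1 else 0 := by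
  rcases le_or_gt j k with h | h
  · obtain ⟨d, rfl⟩ := Nat.exists_eq_add_of_le h
    rw [inv_pow, pow_add, inv_mul_cancel_left, Units.val_pow_eq_pow_val, coeff_x_pow (by omega)]
    exact if_congr (by omega) rfl rfl
  · obtain ⟨d, rfl⟩ := Nat.exists_eq_add_of_le h.le
    have hx : (x S N)⁻¹ ^ (k + d) * x S N ^ k = -x S N ^ (N - d) := by
      rw [inv_pow, inv_mul_eq_iff_eq_mul, mul_neg, ← pow_add,
        show k + d + (N - d) = k + N by omega, pow_add, x_pow, mul_neg_one, neg_neg]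
    rw [hx, Units.val_neg, Units.val_pow_eq_pow_val, map_neg, coeff_x_pow (by omega),
      if_neg (by omega), if_neg (by omega), neg_zero]

theorem coeff_eq_coeff_zero {j : ℕ} (hj : j < N) (c : Negacyclic S N) :
    coeff j c = coeff 0 ((((x S N)⁻¹ : (Negacyclic S N)ˣ) : Negacyclic S N) ^ j * c) := by
  have hdelta {k : ℕ} (hk : k ∈ Finset.range N) :=
    coeff_zero_x_inv_pow_mul_x_pow (S := S) hj (Finset.mem_range.mp hk)
  push_cast at hdelta
  conv_rhs => rw [← sum_coeff_smul_x_pow c, Finset.mul_sum, map_sum]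
  have hj' := Finset.mem_range.mpr hj
  rw [Finset.sum_eq_single_of_mem j hj']
  · rw [mul_smul_comm, map_smul, hdelta hj', if_pos rfl, smul_eq_mul, mul_one]
  · intro k hk hkj
    rw [mul_smul_comm, map_smul, hdelta hk, if_neg hkj, smul_zero]

theorem isFrobeniusForm_coeff_zero : IsFrobeniusForm (coeff 0 : Negacyclic S N →ₗ[S] S) := by
  intro c hc
  rw [← sum_coeff_smul_x_pow c]
  refine Finset.sum_eq_zero fun j hj => ?_
  rw [coeff_eq_coeff_zero (Finset.mem_range.mp hj), mul_comm, hc, zero_smul]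

/-- The dot product of the coefficient vectors of two codewords. -/
def dot (c d : Negacyclic S N) : S :=
  ∑ j ∈ Finset.range N, coeff j c * coeff j d

theorem dot_eq_coeff_zero (c d : Negacyclic S N) : dot c d = coeff 0 (inversion S N c * d) := by
  conv_rhs => rw [← sum_coeff_smul_x_pow c, map_sum, Finset.sum_mul, map_sum]
  refine Finset.sum_congr rfl fun j hj => ?_
  rw [map_smul, map_pow, inversion_x, smul_mul_assoc, map_smul, smul_eq_mul,
    coeff_eq_coeff_zero (Finset.mem_range.mp hj) d]

theorem dot_mul_left (a c d : Negacyclic S N) :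
    dot (a * c) d = dot c (inversion S N a * d) := by
  rw [dot_eq_coeff_zero, dot_eq_coeff_zero, map_mul (inversion S N), mul_assoc, mul_left_comm]

/-- The dual code `C⊥` of a negacyclic code. -/
def dual (C : Ideal (Negacyclic S N)) : Ideal (Negacyclic S N) where
  carrier := {c | ∀ d ∈ C, dot c d = 0}
  zero_mem' d _ := by rw [dot_eq_coeff_zero, map_zero, zero_mul, map_zero]
  add_mem' {a b} ha hb d hd := by
    rw [dot_eq_coeff_zero, map_add, add_mul, map_add, ← dot_eq_coeff_zero, ← dot_eq_coeff_zero,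
      ha d hd, hb d hd, add_zero]
  smul_mem' a c hc d hd := by
    rw [smul_eq_mul, dot_mul_left]
    exact hc _ (C.mul_mem_left _ hd)

theorem dual_eq_comap_annihilator (C : Ideal (Negacyclic S N)) :
    dual C = C.annihilator.comap (inversion S N) := by
  ext c
  rw [Ideal.mem_comap, Submodule.mem_annihilator]
  refine ⟨fun hc d hd => isFrobeniusForm_coeff_zero _ fun e => ?_, fun hc d hd => ?_⟩
  · rw [smul_eq_mul, mul_assoc, ← dot_eq_coeff_zero]
    exact hc _ (C.mul_mem_right e hd)
  · rw [dot_eq_coeff_zero, ← smul_eq_mul, hc d hd, map_zero]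

end Dual

section Map

variable {S T : Type*} [CommRing S] [CommRing T] (N : ℕ)

theorem map_modulus (φ : S →+* T) : (X ^ N + 1 : S[X]).map φ = X ^ N + 1 := by
  rw [Polynomial.map_add, Polynomial.map_pow, map_X, Polynomial.map_one]

/-- Coefficientwise application of a ring homomorphism. -/
def map (φ : S →+* T) : Negacyclic S N →+* Negacyclic T N :=
  AdjoinRoot.map φ _ _ (map_modulus N φ).symm.dvd

variable {N} {φ : S →+* T}

theorem map_surjective (hφ : Function.Surjective φ) : Function.Surjective (map N φ) :=
  adjoinRoot_map_surjective hφ _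

theorem ker_map (hφ : Function.Surjective φ) :
    RingHom.ker (map N φ) = (RingHom.ker φ).map (algebraMap S (Negacyclic S N)) :=
  ker_adjoinRoot_map hφ (.of_eq (map_modulus N φ).symm)

theorem map_algebraMap (r : S) :
    map N φ (algebraMap S (Negacyclic S N) r) = algebraMap T (Negacyclic T N) (φ r) :=
  AdjoinRoot.map_of φ _ _ (map_modulus N φ).symm.dvd r

variable [NeZero N]

theorem map_x : map N φ (x S N) = x T N :=
  AdjoinRoot.map_root φ _ _ (map_modulus N φ).symm.dvd

theorem map_x_inv :
    map N φ ((x S N)⁻¹ : (Negacyclic S N)ˣ) = ((x T N)⁻¹ : (Negacyclic T N)ˣ) := by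
  refine (Units.inv_eq_of_mul_eq_one_right ?_).symm
  rw [← map_x (φ := φ), ← map_mul, Units.mul_inv, map_one]

theorem map_inversion (c : Negacyclic S N) :
    map N φ (inversion S N c) = inversion T N (map N φ c) := by
  rw [← sum_coeff_smul_x_pow c]
  simp only [map_sum, Algebra.smul_def, map_mul, map_pow, map_x, map_algebraMap, inversion_x,
    map_x_inv, AlgEquiv.commutes]

end Map

section Field

variable {F : Type*} [Field F] {p s : ℕ} [Fact p.Prime] [CharP F p]

theorem ker_mk_X_pow :
    RingHom.ker (AdjoinRoot.mk (X ^ p ^ s + 1 : F[X])) = Ideal.span {(X + 1) ^ p ^ s} := by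
  rw [add_pow_char_pow, one_pow]
  exact Ideal.mk_ker

theorem prime_X_add_one : Prime (X + 1 : F[X]) := by
  simpa only [map_neg, map_one, sub_neg_eq_add] using prime_X_sub_C (-1 : F)

theorem spanExponent_annihilator (I : Ideal (Negacyclic F (p ^ s))) :
    spanExponent (x F (p ^ s) + 1 : Negacyclic F (p ^ s)) I.annihilator =
      p ^ s - spanExponent (x F (p ^ s) + 1 : Negacyclic F (p ^ s)) I :=
  _root_.spanExponent_annihilator (ϖ := X + 1) AdjoinRoot.mk_surjective ker_mk_X_pow
    prime_X_add_one I

theorem comap_inversion (I : Ideal (Negacyclic F (p ^ s))) :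
    I.comap (inversion F (p ^ s)) = I := by
  have hle : I ≤ I.comap (inversion F (p ^ s)) := by
    obtain ⟨k, -, hI⟩ :
        ∃ k ≤ p ^ s, I = Ideal.span {(x F (p ^ s) + 1 : Negacyclic F (p ^ s)) ^ k} :=
      exists_eq_span_map_pow (ϖ := X + 1) AdjoinRoot.mk_surjective ker_mk_X_pow prime_X_add_one I
    have hx : inversion F (p ^ s) (x F (p ^ s) + 1) =
        ((x F (p ^ s))⁻¹ : (Negacyclic F (p ^ s))ˣ) * (x F (p ^ s) + 1) := by
      rw [map_add, inversion_x, map_one, mul_add, Units.inv_mul, mul_one, add_comm]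
    rw [hI, Ideal.span_singleton_le_iff_mem, Ideal.mem_comap, Ideal.mem_span_singleton, map_pow, hx,
      mul_pow]
    exact dvd_mul_left _ _
  refine le_antisymm (fun c hc => ?_) hle
  rw [← inversion_inversion c]
  exact hle hc

end Field

section Torsion

variable (F : Type*) [Field F] (n N : ℕ)

/-- The element `u` of `F[u, x]/⟨u ^ (n + 1), x ^ N + 1⟩`. -/
def u : Negacyclic (Truncated F n) N :=
  algebraMap (Truncated F n) _ (Truncated.u F n)

/-- Reduction modulo `u`. -/
def reduction : Negacyclic (Truncated F n) N →+* Negacyclic F N :=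
  map N (Truncated.residue F n)

variable {F n N}

theorem reduction_surjective : Function.Surjective (reduction F n N) :=
  map_surjective (Truncated.residue_surjective F n)

theorem ker_reduction : RingHom.ker (reduction F n N) = Ideal.span {u F n N} := by
  rw [reduction, ker_map (Truncated.residue_surjective F n), Truncated.ker_residue, Ideal.map_span,
    Set.image_singleton, u]

/-- The torsion code `Tor_i(C)`. -/
def torsionCode (C : Ideal (Negacyclic (Truncated F n) N)) (i : ℕ) : Ideal (Negacyclic F N) :=
  torsion (reduction F n N) (u F n N) C i

variable [NeZero N]

/-- The torsion degree `T_i(C)`: the exponent of `Tor_i(C)` with respect to `x + 1`. -/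
def torsionDegree (C : Ideal (Negacyclic (Truncated F n) N)) (i : ℕ) : ℕ :=
  spanExponent (x F N + 1 : Negacyclic F N) (torsionCode C i)

theorem u_pow_mul_eq_zero_iff {j : ℕ} (hj : j ≤ n + 1) (c : Negacyclic (Truncated F n) N) :
    u F n N ^ j * c = 0 ↔ u F n N ^ (n + 1 - j) ∣ c := by
  rw [u, ← map_pow, ← map_pow]
  exact algebraMap_mul_eq_zero_iff_dvd (Truncated.u_pow_mul_eq_zero_iff hj) c

theorem annihilator_inf (I J : Ideal (Negacyclic (Truncated F n) N)) :
    (I ⊓ J).annihilator = I.annihilator ⊔ J.annihilator :=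
  have : Module.Finite F (Truncated F n) := (monic_X_pow (n + 1)).finite_adjoinRoot
  have : Module.Finite F (Negacyclic (Truncated F n) N) := .trans (Truncated F n) _
  (Truncated.isFrobeniusForm_topCoeff.comp isFrobeniusForm_coeff_zero).annihilator_inf I J

theorem torsionCode_annihilator (C : Ideal (Negacyclic (Truncated F n) N)) {i : ℕ} (hi : i ≤ n) :
    torsionCode C.annihilator i = (torsionCode C (n - i)).annihilator :=
  torsion_annihilator reduction_surjective ker_reduction (fun _ hj => u_pow_mul_eq_zero_iff hj)
    annihilator_inf C hi

theorem torsionCode_comap_inversion (C : Ideal (Negacyclic (Truncated F n) N)) (i : ℕ) :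
    torsionCode (C.comap (inversion (Truncated F n) N)) i =
      (torsionCode C i).comap (inversion F N) :=
  torsion_comap (σ := (inversion (Truncated F n) N).toRingEquiv)
    (τ := (inversion F N).toRingEquiv) reduction_surjective map_inversion
    ((inversion (Truncated F n) N).commutes _) C i

theorem torsionCode_dual {p s : ℕ} [Fact p.Prime] [CharP F p]
    (C : Ideal (Negacyclic (Truncated F n) (p ^ s))) (i : ℕ) :
    torsionCode (dual C) i = torsionCode C.annihilator i := by
  rw [dual_eq_comap_annihilator, torsionCode_comap_inversion, comap_inversion]

end Torsion

end Negacyclic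

open Negacyclic in
theorem stmt1_general {F : Type*} [Field F] {p n s : ℕ} [Fact p.Prime] [CharP F p]
    (C : Ideal (Negacyclic (Truncated F n) (p ^ s))) {i : ℕ} (hi : i ≤ n) :
    torsionDegree (dual C) i = torsionDegree C.annihilator i ∧
      torsionDegree C.annihilator i = p ^ s - torsionDegree C (n - i) := by
  refine ⟨by rw [torsionDegree, torsionCode_dual, torsionDegree], ?_⟩
  rw [torsionDegree, torsionCode_annihilator C hi, Negacyclic.spanExponent_annihilator,
    torsionDegree]

section BinaryCase

open Negacyclic

variable {m s : ℕ} (C : Ideal (RR m s))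

theorem dualSet_coe : dualSet m s C = (dual C : Ideal (Negacyclic (Truncated (Fq m) 2) (2 ^ s))) :=
  rfl

theorem annSet_coe : annSet m s C = C.annihilator := by
  ext c
  exact Submodule.mem_annihilator.symm

theorem muRK_eq_reduction : muRK m s = reduction (Fq m) 2 (2 ^ s) :=
  rfl

theorem uR_eq_u : uR m s = u (Fq m) 2 (2 ^ s) :=
  rfl

theorem torSet_coe (i : ℕ) :
    TorSet m s C i = torsionCode (n := 2) (N := 2 ^ s) C i := by
  rw [TorSet, muRK_eq_reduction, uR_eq_u]
  exact Set.ext fun b => (mem_torsion reduction_surjective).symm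

theorem tdeg_coe (i : ℕ) : Tdeg m s C i = torsionDegree (n := 2) (N := 2 ^ s) C i := by
  rw [Tdeg, torSet_coe]
  simp only [SetLike.coe_set_eq]
  rfl

end BinaryCase

/-- For every ideal `C` of `𝓡` and `0 ≤ i ≤ 2`,
`T_i(C⊥) = T_i(𝒜(C)) = 2^s − T_{2−i}(C)`. -/
theorem stmt1 (m s : ℕ) (hm : 0 < m) (hs : 0 < s) (C : Ideal (RR m s)) (i : ℕ) (hi : i ≤ 2) :
    Tdeg m s (dualSet m s (C : Set (RR m s))) i = Tdeg m s (annSet m s (C : Set (RR m s))) i ∧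
    Tdeg m s (annSet m s (C : Set (RR m s))) i = 2 ^ s - Tdeg m s (C : Set (RR m s)) (2 - i) := by
  rw [dualSet_coe, annSet_coe, tdeg_coe, tdeg_coe, tdeg_coe]
  exact stmt1_general (p := 2) (n := 2) C hi
end
end

section
/- If C is a self-dual ideal of 𝓡 (a self-dual cyclic code of length 2^s over R₃), then T_1(C) = 2^{s-1} and T_2(C) = 2^s − T_0(C). -/
noncomputable section

open Polynomial

/-!
Let `A` be a chain ring that is finite-dimensional over its residue field `K`, with uniformizer `u`
of nilpotency index `n + 1`, and let `τ : A → K` be a linear functional for which `τ (u ^ n * a)` is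
the residue of `a`. Then the form `τ (x · y)` on a free `A`-module gives the same duals of
submodules as the dot product, multiplication by `u` is self-adjoint for it, and reduction `π`
modulo `u` is adjoint to multiplication by `u ^ n` in the sense that `π x · π y = τ (x · u ^ n y)`.
Taking orthogonals therefore gives `Tor_i(C⊥)⊥ = Tor_{n-i}(C)`, so the dimensions of `Tor_i(C⊥)`
and `Tor_{n-i}(C)` add up to the rank. For `A = R₃` and cyclic codes of length `2^s`, where
`dim Tor_i(C) = 2^s - T_i(C)`, this says `T_i(C⊥) + T_{2-i}(C) = 2^s`.
-/

section TorsionDuality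

variable {K V W : Type*} [Field K] [AddCommGroup V] [Module K V] [AddCommGroup W] [Module K W]

/-- The `i`-th torsion code of a subspace `C` of `V`. Here `N` plays the role of multiplication by
the uniformizer `u` of a chain ring, and `π` that of reduction modulo `u`. -/
def torsionCode (N : Module.End K V) (π : V →ₗ[K] W) (C : Submodule K V) (i : ℕ) :
    Submodule K W :=
  (C.comap (N ^ i)).map π

lemma comap_orthogonal_map {U : Type*} [AddCommGroup U] [Module K U]
    {B : LinearMap.BilinForm K U} {β : LinearMap.BilinForm K W}
    {f : U →ₗ[K] W} {g : V →ₗ[K] U} {h : V →ₗ[K] W}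
    (hadj : ∀ x y, β (f x) (h y) = B x (g y)) (D : Submodule K U) :
    (β.orthogonal (D.map f)).comap h = (B.orthogonal D).comap g := by
  ext y
  simp [LinearMap.BilinForm.mem_orthogonal_iff, hadj]

variable {N : Module.End K V} {π : V →ₗ[K] W} {n : ℕ}

lemma comap_torsionCode
    (hN : ∀ i j, i + j = n + 1 → LinearMap.ker (N ^ i) = LinearMap.range (N ^ j))
    (hπ : LinearMap.ker π = LinearMap.range N) (C : Submodule K V) {i j : ℕ} (hij : i + j = n) :
    (torsionCode N π C j).comap π = (C.map (N ^ i)).comap (N ^ n) := by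
  have hsplit (x : V) : (N ^ n) x = (N ^ i) ((N ^ j) x) := by
    rw [← hij, pow_add, Module.End.mul_apply]
  have hNn (z : V) : (N ^ n) (N z) = 0 := by
    rw [← LinearMap.mem_ker, hN n 1 rfl, pow_one]
    exact LinearMap.mem_range_self N z
  have hπN (z : V) : π (N z) = 0 := LinearMap.mem_ker.1 (hπ ▸ LinearMap.mem_range_self N z)
  ext x
  simp only [torsionCode, Submodule.mem_comap, Submodule.mem_map]
  constructor
  · rintro ⟨y, hy, hyx⟩
    obtain ⟨z, hz⟩ : y - x ∈ LinearMap.range N := by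
      rw [← hπ, LinearMap.mem_ker, map_sub, hyx, sub_self]
    refine ⟨_, hy, ?_⟩
    rw [← hsplit, ← sub_eq_zero, ← map_sub, ← hz, hNn]
  · rintro ⟨c, hc, hcx⟩
    obtain ⟨z, hz⟩ : c - (N ^ j) x ∈ LinearMap.range (N ^ (j + 1)) := by
      rw [← hN i (j + 1) (by omega), LinearMap.mem_ker, map_sub, hcx, ← hsplit, sub_self]
    refine ⟨x + N z, ?_, by rw [map_add, hπN, add_zero]⟩
    rw [map_add, ← Module.End.mul_apply, ← pow_succ, hz, add_sub_cancel]
    exact hc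

theorem orthogonal_torsionCode_orthogonal [FiniteDimensional K V]
    {B : LinearMap.BilinForm K V} {β : LinearMap.BilinForm K W}
    (hN : ∀ i j, i + j = n + 1 → LinearMap.ker (N ^ i) = LinearMap.range (N ^ j))
    (hπ : LinearMap.ker π = LinearMap.range N) (hsurj : Function.Surjective π)
    (hB : B.Nondegenerate) (hBr : B.IsRefl) (hBN : ∀ i x y, B ((N ^ i) x) y = B x ((N ^ i) y))
    (hβ : ∀ x y, β (π x) (π y) = B x ((N ^ n) y)) (C : Submodule K V) {i j : ℕ}
    (hij : i + j = n) :
    β.orthogonal (torsionCode N π (B.orthogonal C) i) = torsionCode N π C j := by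
  have hmap : B.orthogonal (C.map (N ^ i)) = (B.orthogonal C).comap (N ^ i) := by
    simpa using comap_orthogonal_map (h := LinearMap.id) (hBN i) C
  refine Submodule.comap_injective_of_surjective hsurj ?_
  rw [comap_torsionCode hN hπ C hij, torsionCode, comap_orthogonal_map hβ, ← hmap,
    LinearMap.BilinForm.orthogonal_orthogonal hB hBr]

end TorsionDuality

section Coordinates

variable {A M ι : Type*} [CommRing A] [AddCommGroup M] [Module A M] [Finite ι]
  (b : Module.Basis ι A M)

lemma exists_smul_eq_iff_forall_dvd_repr {t : A} {x : M} :
    (∃ y, t • y = x) ↔ ∀ i, t ∣ b.repr x i := by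
  refine ⟨?_, fun h ↦ ?_⟩
  · rintro ⟨y, rfl⟩ i
    exact ⟨b.repr y i, by simp⟩
  · choose c hc using h
    refine ⟨b.equivFun.symm c, b.equivFun.injective ?_⟩
    rw [map_smul, LinearEquiv.apply_symm_apply]
    exact funext fun i ↦ (hc i).symm

include b in
lemma ker_lsmul_eq_range_lsmul (K : Type*) [Field K] [Algebra K A] [Module K M]
    [IsScalarTower K A M] {r t : A} (h : ∀ a, r * a = 0 ↔ t ∣ a) :
    LinearMap.ker (Algebra.lsmul K K M r) = LinearMap.range (Algebra.lsmul K K M t) := by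
  ext x
  have hx : r • x = 0 ↔ ∀ i, t ∣ b.repr x i := by
    simp only [b.ext_elem_iff, map_smul, map_zero, Finsupp.smul_apply, Finsupp.zero_apply,
      smul_eq_mul, h]
  simpa only [LinearMap.mem_ker, LinearMap.mem_range, Algebra.lsmul_coe,
    exists_smul_eq_iff_forall_dvd_repr b] using hx

variable [DecidableEq ι]

omit [Finite ι] in
lemma toDual_eq_sum [Fintype ι] (x y : M) : b.toDual x y = ∑ i, b.repr x i * b.repr y i := by
  conv_lhs => rw [← b.sum_repr x]
  simp only [map_sum, map_smul, LinearMap.sum_apply, LinearMap.smul_apply, b.toDual_apply_right,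
    smul_eq_mul]

lemma toDual_comm (x y : M) : b.toDual x y = b.toDual y x := by
  obtain ⟨_⟩ := nonempty_fintype ι
  simp only [toDual_eq_sum, mul_comm]

lemma toDual_nondegenerate : LinearMap.BilinForm.Nondegenerate (R := A) b.toDual := by
  have hr : LinearMap.IsRefl b.toDual := fun x y h ↦ by rwa [toDual_comm]
  exact hr.nondegenerate_iff_separatingLeft.2 fun x hx ↦ b.toDual_inj x (LinearMap.ext hx)

lemma toDual_map_map {A' M' : Type*} [CommRing A'] [AddCommGroup M'] [Module A' M']
    {b' : Module.Basis ι A' M'} {ε : A →+* A'} {f : M → M'}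
    (hf : ∀ x i, b'.repr (f x) i = ε (b.repr x i)) (x y : M) :
    b'.toDual (f x) (f y) = ε (b.toDual x y) := by
  obtain ⟨_⟩ := nonempty_fintype ι
  simp only [toDual_eq_sum, hf, map_sum, map_mul]

end Coordinates

section ChainRing

variable {K A M ι : Type*} [Field K] [CommRing A] [Algebra K A] [AddCommGroup M] [Module A M]
  [Module K M] [IsScalarTower K A M] [DecidableEq ι]

/-- The `K`-valued bilinear form `(x, y) ↦ τ (x · y)`, where `x · y` is the dot product in the
`A`-basis `b`. For a suitable `τ` it has the same orthogonals of `A`-submodules as the dot product,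
and it makes linear algebra over `K` available. -/
def functionalDot (b : Module.Basis ι A M) (τ : A →ₗ[K] K) : LinearMap.BilinForm K M :=
  (LinearMap.restrictScalars₁₂ K K (b.toDual : M →ₗ[A] M →ₗ[A] A)).compr₂ τ

lemma functionalDot_apply (b : Module.Basis ι A M) (τ : A →ₗ[K] K) (x y : M) :
    functionalDot b τ x y = τ (b.toDual x y) := rfl

lemma functionalDot_smul_left (b : Module.Basis ι A M) (τ : A →ₗ[K] K) (r : A) (x y : M) :
    functionalDot b τ (r • x) y = functionalDot b τ x (r • y) := by
  simp only [functionalDot_apply, map_smul, LinearMap.smul_apply]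

lemma orthogonal_functionalDot (b : Module.Basis ι A M) {τ : A →ₗ[K] K}
    (hτ : ∀ a, (∀ r, τ (r * a) = 0) → a = 0) (C : Submodule A M) :
    (functionalDot b τ).orthogonal (C.restrictScalars K) =
      (LinearMap.BilinForm.orthogonal b.toDual C).restrictScalars K := by
  ext y
  simp only [LinearMap.BilinForm.mem_orthogonal_iff, Submodule.restrictScalars_mem]
  refine ⟨fun h x hx ↦ hτ _ fun r ↦ ?_, fun h x hx ↦ ?_⟩
  · simpa [functionalDot_apply] using h _ (C.smul_mem r hx)
  · rw [functionalDot_apply, h x hx, map_zero]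

variable [Finite ι]

lemma functionalDot_isRefl (b : Module.Basis ι A M) (τ : A →ₗ[K] K) :
    (functionalDot b τ).IsRefl := fun x y h ↦ by
  rwa [functionalDot_apply, toDual_comm]

lemma functionalDot_nondegenerate (b : Module.Basis ι A M) {τ : A →ₗ[K] K}
    (hτ : ∀ a, (∀ r, τ (r * a) = 0) → a = 0) : (functionalDot b τ).Nondegenerate := by
  refine (functionalDot_isRefl b τ).nondegenerate_iff_separatingLeft.2 fun x hx ↦ ?_
  refine (toDual_nondegenerate b).1 x fun y ↦ hτ _ fun r ↦ ?_
  simpa [functionalDot_apply] using hx (r • y)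

variable {u : A} {n : ℕ} {ε : A →+* K} {τ : A →ₗ[K] K}

lemma eq_zero_of_forall_map_mul_eq_zero (hu : u ^ (n + 1) = 0) (hε : ∀ a, ε a = 0 ↔ u ∣ a)
    (hτ : ∀ a, τ (u ^ n * a) = ε a) {a : A} (ha : ∀ r, τ (r * a) = 0) : a = 0 := by
  have hdvd (k : ℕ) (hk : k ≤ n + 1) : u ^ k ∣ a := by
    induction k with
    | zero => simp
    | succ k ih =>
      obtain ⟨c, rfl⟩ := ih (by omega)
      have hc : ε c = 0 := by
        rw [← hτ, ← ha (u ^ (n - k)), ← mul_assoc, ← pow_add, Nat.sub_add_cancel (by omega)]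
      rw [pow_succ]
      exact mul_dvd_mul_left _ ((hε c).1 hc)
  simpa [hu] using hdvd (n + 1) le_rfl

variable {W : Type*} [AddCommGroup W] [Module K W] {b : Module.Basis ι A M}
  {b₀ : Module.Basis ι K W} {π : M →ₗ[K] W}

omit [DecidableEq ι] in
lemma ker_eq_range_lsmul (hε : ∀ a, ε a = 0 ↔ u ∣ a)
    (hπ : ∀ x i, b₀.repr (π x) i = ε (b.repr x i)) :
    LinearMap.ker π = LinearMap.range (Algebra.lsmul K K M u) := by
  ext x
  simp only [LinearMap.mem_ker, LinearMap.mem_range, Algebra.lsmul_coe,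
    exists_smul_eq_iff_forall_dvd_repr b, ← hε, ← hπ, b₀.ext_elem_iff, map_zero,
    Finsupp.zero_apply]

theorem orthogonal_torsionCode_orthogonal_toDual [Module.Finite K A]
    (hu : ∀ i j, i + j = n + 1 → ∀ a, u ^ i * a = 0 ↔ u ^ j ∣ a)
    (hε : ∀ a, ε a = 0 ↔ u ∣ a) (hτ : ∀ a, τ (u ^ n * a) = ε a)
    (hsurj : Function.Surjective π) (hπ : ∀ x i, b₀.repr (π x) i = ε (b.repr x i))
    (C : Submodule A M) {i j : ℕ} (hij : i + j = n) :
    LinearMap.BilinForm.orthogonal b₀.toDual (torsionCode (Algebra.lsmul K K M u) π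
        ((LinearMap.BilinForm.orthogonal b.toDual C).restrictScalars K) i) =
      torsionCode (Algebra.lsmul K K M u) π (C.restrictScalars K) j := by
  have : Module.Finite A M := .of_basis b
  have : FiniteDimensional K M := Module.Finite.trans A M
  have hfrob (a : A) : (∀ r, τ (r * a) = 0) → a = 0 :=
    eq_zero_of_forall_map_mul_eq_zero (by simpa using (hu (n + 1) 0 rfl 1).2) hε hτ
  rw [← orthogonal_functionalDot b hfrob]
  refine orthogonal_torsionCode_orthogonal (fun i j hij ↦ ?_) (ker_eq_range_lsmul hε hπ) hsurj
    (functionalDot_nondegenerate b hfrob) (functionalDot_isRefl b τ) (fun i x y ↦ ?_)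
    (fun x y ↦ ?_) _ hij
  · simpa only [← map_pow] using ker_lsmul_eq_range_lsmul b K (hu i j hij)
  · simpa only [← map_pow, Algebra.lsmul_coe] using functionalDot_smul_left b τ (u ^ i) x y
  · rw [toDual_map_map b hπ, ← hτ, ← map_pow, Algebra.lsmul_coe, functionalDot_apply, map_smul,
      smul_eq_mul]

theorem finrank_torsionCode_orthogonal_add [Module.Finite K A]
    (hu : ∀ i j, i + j = n + 1 → ∀ a, u ^ i * a = 0 ↔ u ^ j ∣ a)
    (hε : ∀ a, ε a = 0 ↔ u ∣ a) (hτ : ∀ a, τ (u ^ n * a) = ε a)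
    (hsurj : Function.Surjective π) (hπ : ∀ x i, b₀.repr (π x) i = ε (b.repr x i))
    (C : Submodule A M) {i j : ℕ} (hij : i + j = n) :
    Module.finrank K (torsionCode (Algebra.lsmul K K M u) π
        ((LinearMap.BilinForm.orthogonal b.toDual C).restrictScalars K) i) +
      Module.finrank K (torsionCode (Algebra.lsmul K K M u) π (C.restrictScalars K) j) =
      Nat.card ι := by
  have : FiniteDimensional K W := .of_basis b₀
  rw [← orthogonal_torsionCode_orthogonal_toDual hu hε hτ hsurj hπ C hij,
    LinearMap.BilinForm.finrank_orthogonal (toDual_nondegenerate b₀),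
    ← Module.finrank_eq_nat_card_basis b₀]
  exact Nat.add_sub_cancel' (Submodule.finrank_le _)

end ChainRing

section TruncatedPolynomial

variable {K : Type*} [Field K]

lemma mk_dvd_mk_iff {f p q : K[X]} (hq : q ∣ f) :
    AdjoinRoot.mk f q ∣ AdjoinRoot.mk f p ↔ q ∣ p := by
  refine ⟨?_, map_dvd _⟩
  rintro ⟨c, hc⟩
  obtain ⟨r, rfl⟩ := AdjoinRoot.mk_surjective c
  rw [← map_mul, AdjoinRoot.mk_eq_mk] at hc
  exact (dvd_iff_dvd_of_dvd_sub (hq.trans hc)).2 (dvd_mul_right q r)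

lemma root_pow_mul_eq_zero_iff {i j e : ℕ} (hij : i + j = e) (a : AdjoinRoot (X ^ e : K[X])) :
    AdjoinRoot.root (X ^ e) ^ i * a = 0 ↔ AdjoinRoot.root (X ^ e) ^ j ∣ a := by
  obtain ⟨p, rfl⟩ := AdjoinRoot.mk_surjective a
  have hj : (X ^ j : K[X]) ∣ X ^ e := pow_dvd_pow X (by omega)
  rw [← AdjoinRoot.mk_X, ← map_pow, ← map_pow, ← map_mul, AdjoinRoot.mk_eq_zero,
    mk_dvd_mk_iff hj, ← hij, pow_add, mul_dvd_mul_iff_left (pow_ne_zero i X_ne_zero)]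

/-- The `i`-th coefficient of the representative of degree `< e` of an element of `K[u]/⟨u^e⟩`. -/
def truncCoeff (K : Type*) [Field K] (e i : ℕ) : AdjoinRoot (X ^ e : K[X]) →ₗ[K] K :=
  lcoeff K i ∘ₗ AdjoinRoot.modByMonicHom (monic_X_pow e)

lemma truncCoeff_root_pow_mul_mk (n : ℕ) (p : K[X]) :
    truncCoeff K (n + 1) n (AdjoinRoot.root _ ^ n * AdjoinRoot.mk _ p) = p.coeff 0 := by
  rw [← AdjoinRoot.mk_X, ← map_pow, ← map_mul, truncCoeff, LinearMap.comp_apply,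
    AdjoinRoot.modByMonicHom_mk, lcoeff_apply]
  have h := congrArg (coeff · n) (modByMonic_add_div (X ^ n * p) (X ^ (n + 1)))
  simpa [coeff_X_pow_mul'] using h

end TruncatedPolynomial

section AdjoinRootBasis

variable {A : Type*} [CommRing A] {g : A[X]}

/-- The basis `1, x, …, x^{n-1}` of `A[x]/⟨g⟩` for a monic `g` of degree `n`, indexed by `Fin n`
for a given `n` so that bases over different coefficient rings share an index type. -/
def monicBasis (hg : g.Monic) {n : ℕ} (hn : g.natDegree = n) :
    Module.Basis (Fin n) A (AdjoinRoot g) :=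
  (AdjoinRoot.powerBasisAux' hg).reindex (finCongr hn)

lemma monicBasis_repr (hg : g.Monic) {n : ℕ} (hn : g.natDegree = n) (c : AdjoinRoot g)
    (j : Fin n) : (monicBasis hg hn).repr c j = (AdjoinRoot.modByMonicHom hg c).coeff j := by
  subst hn
  rfl

end AdjoinRootBasis

section PrimePowerQuotient

variable {K : Type*} [Field K] {f p : K[X]}

lemma exists_ideal_eq_span_mk_pow (hp : Prime p) {n : ℕ} (hf : f = p ^ n)
    (I : Ideal (AdjoinRoot f)) : ∃ k ≤ n, I = Ideal.span {AdjoinRoot.mk f p ^ k} := by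
  obtain ⟨q, hq⟩ : ∃ q, I.comap (AdjoinRoot.mk f) = Ideal.span {q} :=
    (IsPrincipalIdealRing.principal _).principal
  have hqf : q ∣ p ^ n := by
    rw [← hf, ← Ideal.mem_span_singleton, ← hq, Ideal.mem_comap, AdjoinRoot.mk_self]
    exact I.zero_mem
  obtain ⟨k, hk, hqk⟩ := (dvd_prime_pow hp n).1 hqf
  refine ⟨k, hk, ?_⟩
  rw [← Ideal.map_comap_of_surjective _ AdjoinRoot.mk_surjective I, hq,
    Ideal.span_singleton_eq_span_singleton.2 hqk, Ideal.map_span, Set.image_singleton, map_pow]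

lemma finrank_span_mk_add_natDegree (hf : f ≠ 0) {d : K[X]} (hd : d ∣ f) :
    Module.finrank K ((Ideal.span {AdjoinRoot.mk f d}).restrictScalars K) + d.natDegree =
      f.natDegree := by
  have : Module.Finite K (AdjoinRoot f) := (AdjoinRoot.powerBasis hf).finite
  have hmap : Ideal.span {AdjoinRoot.mk f d} =
      (Ideal.span {d}).map (Ideal.Quotient.mkₐ K (Ideal.span {f})) := by
    rw [Ideal.map_span, Set.image_singleton]
    rfl
  let e' : (AdjoinRoot f ⧸ Ideal.span {AdjoinRoot.mk f d}) ≃ₗ[K] K[X] ⧸ Ideal.span {d} := by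
    rw [hmap]
    exact (DoubleQuot.quotQuotEquivQuotOfLEₐ K
      (Ideal.span_singleton_le_span_singleton.2 hd)).toLinearEquiv
  let e := (Submodule.Quotient.restrictScalarsEquiv K (Ideal.span {AdjoinRoot.mk f d})).trans e'
  have hquot := Submodule.finrank_quotient_add_finrank
    ((Ideal.span {AdjoinRoot.mk f d}).restrictScalars K)
  rw [e.finrank_eq, finrank_quotient_span_eq_natDegree, (AdjoinRoot.powerBasis hf).finrank,
    AdjoinRoot.powerBasis_dim] at hquot
  rw [add_comm, hquot]

end PrimePowerQuotient

section CyclicCode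

lemma epsR3_mk (m : ℕ) (p : (Fq m)[X]) : epsR3 m (AdjoinRoot.mk _ p) = p.coeff 0 := by
  rw [epsR3, AdjoinRoot.lift_mk, eval₂_id, coeff_zero_eq_eval_zero]

lemma epsR3_eq_zero_iff (m : ℕ) (a : R3 m) : epsR3 m a = 0 ↔ uu m ∣ a := by
  obtain ⟨p, rfl⟩ := AdjoinRoot.mk_surjective a
  rw [epsR3_mk, uu, ← AdjoinRoot.mk_X, mk_dvd_mk_iff (dvd_pow_self X three_ne_zero), X_dvd_iff]

lemma uu_pow_mul_eq_zero_iff (m : ℕ) {i j : ℕ} (hij : i + j = 3) (a : R3 m) :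
    uu m ^ i * a = 0 ↔ uu m ^ j ∣ a :=
  root_pow_mul_eq_zero_iff hij a

lemma truncCoeff_uu_sq_mul (m : ℕ) (a : R3 m) :
    truncCoeff (Fq m) 3 2 (uu m ^ 2 * a) = epsR3 m a := by
  obtain ⟨p, rfl⟩ := AdjoinRoot.mk_surjective a
  rw [epsR3_mk, uu, truncCoeff_root_pow_mul_mk 2]

lemma natDegree_X_pow_add_one {A : Type*} [CommRing A] [Nontrivial A] (n : ℕ) :
    (X ^ n + 1 : A[X]).natDegree = n := by
  simpa using natDegree_X_pow_add_C (n := n) (r := (1 : A))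

lemma natDegree_gR (m s : ℕ) : (gR m s).natDegree = 2 ^ s :=
  have := (epsR3 m).domain_nontrivial
  natDegree_X_pow_add_one (2 ^ s)

lemma natDegree_gK (m s : ℕ) : (gK m s).natDegree = 2 ^ s :=
  natDegree_X_pow_add_one (2 ^ s)

lemma muRK_mk (m s : ℕ) (p : (R3 m)[X]) :
    muRK m s (AdjoinRoot.mk _ p) = AdjoinRoot.mk _ (p.map (epsR3 m)) := by
  rw [muRK, AdjoinRoot.lift_mk, ← eval₂_map]
  exact AdjoinRoot.aeval_eq _

lemma epsR3_surjective (m : ℕ) : Function.Surjective (epsR3 m) := fun a ↦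
  ⟨AdjoinRoot.mk _ (C a), by rw [epsR3_mk, coeff_C_zero]⟩

lemma muRK_surjective (m s : ℕ) : Function.Surjective (muRK m s) := fun x ↦ by
  obtain ⟨p, rfl⟩ := AdjoinRoot.mk_surjective x
  obtain ⟨q, rfl⟩ := Polynomial.map_surjective _ (epsR3_surjective m) p
  exact ⟨AdjoinRoot.mk _ q, muRK_mk m s q⟩

/-- Reduction `μ : 𝓡 → 𝓚` modulo `u`, as a map of `F`-algebras. -/
def muRKAlgHom (m s : ℕ) : RR m s →ₐ[Fq m] KK m s where
  __ := muRK m s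
  commutes' a := by
    have h : algebraMap (Fq m) (RR m s) a = AdjoinRoot.mk _ (C (AdjoinRoot.mk _ (C a))) := rfl
    change muRK m s _ = _
    rw [h, muRK_mk, map_C, epsR3_mk, coeff_C_zero]
    rfl

/-- The basis `1, x, …, x^{2^s-1}` of `𝓡` over `R₃`, in which the dot product is taken. -/
def basisRR (m s : ℕ) : Module.Basis (Fin (2 ^ s)) (R3 m) (RR m s) :=
  monicBasis (gR_monic m s) (natDegree_gR m s)

/-- The basis `1, x, …, x^{2^s-1}` of `𝓚` over `F`. -/
def basisKK (m s : ℕ) : Module.Basis (Fin (2 ^ s)) (Fq m) (KK m s) :=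
  monicBasis (gK_monic m s) (natDegree_gK m s)

lemma basisKK_repr_muRK (m s : ℕ) (c : RR m s) (j : Fin (2 ^ s)) :
    (basisKK m s).repr (muRK m s c) j = epsR3 m ((basisRR m s).repr c j) := by
  obtain ⟨p, rfl⟩ := AdjoinRoot.mk_surjective c
  have hg : gK m s = (gR m s).map (epsR3 m) := by simp [gK, gR]
  rw [muRK_mk, basisKK, basisRR, monicBasis_repr, monicBasis_repr, AdjoinRoot.modByMonicHom_mk,
    AdjoinRoot.modByMonicHom_mk, hg, ← map_modByMonic _ (gR_monic m s), coeff_map]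

lemma dotR_eq_toDual (m s : ℕ) (c d : RR m s) : dotR m s c d = (basisRR m s).toDual c d := by
  simp only [toDual_eq_sum, basisRR, monicBasis_repr, dotR, coeffR, repR]
  exact Finset.sum_range _

lemma restrictScalars_eq_orthogonal (m s : ℕ) {C D : Ideal (RR m s)}
    (hD : (D : Set (RR m s)) = dualSet m s C) :
    D.restrictScalars (R3 m) =
      LinearMap.BilinForm.orthogonal (basisRR m s).toDual (C.restrictScalars (R3 m)) := by
  ext c
  have hc : c ∈ D ↔ ∀ d ∈ C, dotR m s c d = 0 := Set.ext_iff.1 hD c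
  simp only [Submodule.restrictScalars_mem, LinearMap.BilinForm.mem_orthogonal_iff, hc,
    dotR_eq_toDual, toDual_comm _ c]

/-- The torsion code `Tor_i(C)` as an `F`-subspace of `𝓚`. -/
def torSubspace (m s : ℕ) (C : Submodule (R3 m) (RR m s)) (i : ℕ) : Submodule (Fq m) (KK m s) :=
  torsionCode (Algebra.lsmul (Fq m) (Fq m) (RR m s) (uu m)) (muRKAlgHom m s).toLinearMap
    (C.restrictScalars (Fq m)) i

lemma coe_torSubspace (m s : ℕ) (C : Ideal (RR m s)) (i : ℕ) :
    (torSubspace m s (C.restrictScalars (R3 m)) i : Set (KK m s)) = TorSet m s C i := by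
  rw [torSubspace, torsionCode, TorSet, Submodule.map_coe, Submodule.comap_coe]
  ext x
  simp only [← map_pow, uR, ← Algebra.smul_def]
  rfl

lemma exists_ideal_coe_eq_TorSet (m s : ℕ) (C : Ideal (RR m s)) (i : ℕ) :
    ∃ I : Ideal (KK m s), (I : Set (KK m s)) = TorSet m s C i := by
  refine ⟨(C.colon {uR m s ^ i}).map (muRK m s), ?_⟩
  ext x
  simp [TorSet, Ideal.mem_map_iff_of_surjective _ (muRK_surjective m s), mul_comm,
    Submodule.mem_colon_singleton]

lemma gK_eq_X_add_one_pow (m s : ℕ) : gK m s = (X + 1) ^ 2 ^ s := by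
  rw [gK, add_pow_char_pow, one_pow]

lemma Tdeg_le_and_TorSet_eq_span (m s : ℕ) (C : Ideal (RR m s)) (i : ℕ) :
    Tdeg m s C i ≤ 2 ^ s ∧ TorSet m s C i =
      ((Ideal.span {(xK m s + 1) ^ Tdeg m s C i} : Ideal (KK m s)) : Set (KK m s)) := by
  obtain ⟨I, hI⟩ := exists_ideal_coe_eq_TorSet m s C i
  have hprime : Prime (X + 1 : (Fq m)[X]) := by simpa using prime_X_sub_C (-1 : Fq m)
  obtain ⟨k, hk, hIk⟩ := exists_ideal_eq_span_mk_pow hprime (gK_eq_X_add_one_pow m s) I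
  have hmem : TorSet m s C i = (Ideal.span {(xK m s + 1) ^ k} : Ideal (KK m s)) := by
    rw [← hI, hIk, map_add, AdjoinRoot.mk_X, map_one, xK]
  refine ⟨(Nat.sInf_le hmem).trans hk, ?_⟩
  exact Nat.sInf_mem (s := {k | TorSet m s C i = (Ideal.span {(xK m s + 1) ^ k} : Ideal (KK m s))})
    ⟨k, hmem⟩

lemma finrank_torSubspace_add_Tdeg (m s : ℕ) (C : Ideal (RR m s)) (i : ℕ) :
    Module.finrank (Fq m) (torSubspace m s (C.restrictScalars (R3 m)) i) + Tdeg m s C i =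
      2 ^ s := by
  obtain ⟨hle, hspan⟩ := Tdeg_le_and_TorSet_eq_span m s C i
  have hsub : torSubspace m s (C.restrictScalars (R3 m)) i =
      (Ideal.span {AdjoinRoot.mk (gK m s) ((X + 1) ^ Tdeg m s C i)}).restrictScalars (Fq m) := by
    refine SetLike.coe_injective ?_
    rw [coe_torSubspace, hspan, map_pow, map_add, AdjoinRoot.mk_X, map_one, xK]
    rfl
  have hdvd : (X + 1) ^ Tdeg m s C i ∣ gK m s := by
    rw [gK_eq_X_add_one_pow]
    exact pow_dvd_pow _ hle
  have hdeg : ((X + 1 : (Fq m)[X]) ^ Tdeg m s C i).natDegree = Tdeg m s C i := by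
    rw [natDegree_pow, ← C_1, natDegree_X_add_C, mul_one]
  have h := finrank_span_mk_add_natDegree (gK_monic m s).ne_zero hdvd
  rwa [hdeg, natDegree_gK, ← hsub] at h

lemma finrank_torSubspace_dual_add (m s : ℕ) {C D : Ideal (RR m s)}
    (hD : (D : Set (RR m s)) = dualSet m s C) {i j : ℕ} (hij : i + j = 2) :
    Module.finrank (Fq m) (torSubspace m s (D.restrictScalars (R3 m)) i) +
      Module.finrank (Fq m) (torSubspace m s (C.restrictScalars (R3 m)) j) = 2 ^ s := by
  have : Module.Finite (Fq m) (R3 m) := (monic_X_pow 3).finite_adjoinRoot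
  have hdual := finrank_torsionCode_orthogonal_add (b := basisRR m s) (b₀ := basisKK m s)
    (π := (muRKAlgHom m s).toLinearMap) (fun _ _ ↦ uu_pow_mul_eq_zero_iff m)
    (epsR3_eq_zero_iff m) (truncCoeff_uu_sq_mul m) (muRK_surjective m s)
    (basisKK_repr_muRK m s) (C.restrictScalars (R3 m)) hij
  rw [restrictScalars_eq_orthogonal m s hD]
  exact hdual.trans (Nat.card_fin _)

end CyclicCode

theorem stmt2_general (m s : ℕ) (C D : Ideal (RR m s))
    (hD : (D : Set (RR m s)) = dualSet m s C) {i j : ℕ} (hij : i + j = 2) :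
    Tdeg m s D i + Tdeg m s C j = 2 ^ s := by
  have hdual := finrank_torSubspace_dual_add m s hD hij
  have hTD := finrank_torSubspace_add_Tdeg m s D i
  have hTC := finrank_torSubspace_add_Tdeg m s C j
  omega

/-- If `C` is a self-dual ideal of `𝓡`, then `T₁(C) = 2^{s-1}` and
`T₂(C) = 2^s − T₀(C)`. -/
theorem stmt2 (m s : ℕ) (hm : 0 < m) (hs : 0 < s) (C : Ideal (RR m s))
    (hC : IsSelfDual m s C) :
    Tdeg m s (C : Set (RR m s)) 1 = 2 ^ (s - 1) ∧
    Tdeg m s (C : Set (RR m s)) 2 = 2 ^ s - Tdeg m s (C : Set (RR m s)) 0 := by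
  have h₁ := stmt2_general m s C C hC (i := 1) (j := 1) rfl
  have h₂ := stmt2_general m s C C hC (i := 2) (j := 0) rfl
  have hpow : 2 ^ s = 2 * 2 ^ (s - 1) := by rw [← pow_succ', Nat.sub_add_cancel hs]
  omega
end
end

section
/- None of the following ideals of 𝓡 is self-dual: the zero ideal ⟨0⟩, the unit ideal ⟨1⟩ = 𝓡, and ⟨u²(x+1)^τ⟩ for any integer 0 ≤ τ ≤ 2^s − 1. (There are no self-dual cyclic codes of Type 1 or Type 2.) -/
noncomputable section

open Polynomial

/-!
Suppose a code `C = C⊥` is contained in `u²𝓡`. Since `u³ = 0`, every multiple of `u` is orthogonal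
to `u²𝓡`, so `u𝓡 ⊆ C⊥ = C ⊆ u²𝓡`. Iterating, `u𝓡 ⊆ uᵏ𝓡` for every `k`, so `u𝓡 = 0` and `C = 0`;
but the dual of the zero code is all of `𝓡`. The unit ideal is not even self-orthogonal: the dot
product of `1` with itself is `1`. All this works for every nonzero bilinear form, and for `uʲ` with
`uᵉ = 0` and `e < 2j` in place of `u²`.
-/

section Nilpotent

variable {R M : Type*} [CommSemiring R] [AddCommMonoid M] [Module R M]

lemma le_pow_smul_of_le_smul {I : Ideal R} {N : Submodule R M} (h : N ≤ I • N) (k : ℕ) :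
    N ≤ I ^ k • N := by
  induction k with
  | zero => simp
  | succ k ih =>
    calc N ≤ I ^ k • N := ih
      _ ≤ I ^ k • I • N := by gcongr
      _ = I ^ (k + 1) • N := by rw [← mul_smul, pow_succ]

lemma eq_bot_of_le_smul_of_isNilpotent {I : Ideal R} (hI : IsNilpotent I) {N : Submodule R M}
    (h : N ≤ I • N) : N = ⊥ := by
  obtain ⟨k, hk⟩ := hI
  simpa [hk] using le_pow_smul_of_le_smul h k

end Nilpotent

section BilinForm

variable {R M : Type*} [CommSemiring R] [AddCommMonoid M] [Module R M]
  {B : LinearMap.BilinForm R M} {N : Submodule R M}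

/-- A submodule `N` is self-dual for the bilinear form `B` if it equals its (right) orthogonal
complement. Specialising `B` to the dot product of words recovers self-duality of codes. -/
def IsSelfDualFor (B : LinearMap.BilinForm R M) (N : Submodule R M) : Prop :=
  B.orthogonal N = N

lemma isSelfDualFor_bot_iff : IsSelfDualFor B ⊥ ↔ Subsingleton M := by
  rw [IsSelfDualFor, LinearMap.BilinForm.orthogonal_bot, eq_comm, subsingleton_iff_bot_eq_top,
    Submodule.subsingleton_iff]

lemma isSelfDualFor_top_iff : IsSelfDualFor B ⊤ ↔ B = 0 := by
  simp only [IsSelfDualFor, Submodule.eq_top_iff', LinearMap.BilinForm.mem_orthogonal_iff,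
    Submodule.mem_top, true_imp_iff, LinearMap.ext_iff, LinearMap.zero_apply]
  exact forall_comm

lemma smul_top_le_orthogonal {I J : Ideal R} (hIJ : I * J = ⊥) (hN : N ≤ J • ⊤) :
    I • ⊤ ≤ B.orthogonal N := by
  refine Submodule.smul_le.2 fun a ha m _ n hn ↦ ?_
  suffices J • ⊤ ≤ LinearMap.ker (a • B.flip m) by simpa using this (hN hn)
  refine Submodule.smul_le.2 fun b hb n _ ↦ ?_
  have hba : b * a = 0 := by simpa [hIJ, mul_comm] using Ideal.mul_mem_mul ha hb
  simp [← mul_assoc, hba]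

lemma IsSelfDualFor.subsingleton_of_le_pow_smul {I : Ideal R} {e j : ℕ} (hI : I ^ e = ⊥)
    (hej : e < 2 * j) (h : IsSelfDualFor B N) (hN : N ≤ I ^ j • ⊤) : Subsingleton M := by
  have horth : I ^ (e - j) • ⊤ ≤ N := by
    have hmul : I ^ (e - j) * I ^ j = ⊥ := by
      rw [← pow_add, eq_bot_iff, ← hI]
      exact Ideal.pow_le_pow_right (by lia)
    exact (smul_top_le_orthogonal hmul hN).trans_eq h
  have hstep : I ^ (e - j) • (⊤ : Submodule R M) ≤ I • I ^ (e - j) • ⊤ :=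
    calc I ^ (e - j) • ⊤ ≤ I ^ j • ⊤ := horth.trans hN
      _ ≤ I ^ (e - j + 1) • ⊤ := Submodule.smul_mono_left (Ideal.pow_le_pow_right (by lia))
      _ = I • I ^ (e - j) • ⊤ := by rw [← mul_smul, pow_succ']
  have hbot : N = ⊥ := by
    rw [eq_bot_iff, ← eq_bot_of_le_smul_of_isNilpotent ⟨e, hI⟩ hstep]
    exact hN.trans (Submodule.smul_mono_left (Ideal.pow_le_pow_right (by lia)))
  exact isSelfDualFor_bot_iff.1 (hbot ▸ h)

end BilinForm

lemma span_singleton_restrictScalars_le_pow_smul_top {R A : Type*} [CommSemiring R]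
    [Semiring A] [Algebra R A] (u : R) (j : ℕ) (f : A) :
    (Ideal.span {algebraMap R A u ^ j * f}).restrictScalars R ≤ Ideal.span {u} ^ j • ⊤ := by
  intro c hc
  obtain ⟨d, rfl⟩ := Ideal.mem_span_singleton'.1 hc
  rw [← map_pow, ← Algebra.smul_def, mul_smul_comm]
  exact Submodule.smul_mem_smul (Ideal.pow_mem_pow (Ideal.mem_span_singleton_self u) j) trivial

theorem stmt3_general {R A : Type*} [CommSemiring R] [Semiring A] [Algebra R A]
    {B : LinearMap.BilinForm R A} (hB : B ≠ 0) {u : R} {e j : ℕ} (hu : u ^ e = 0)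
    (hej : e < 2 * j) :
    ¬ IsSelfDualFor B ⊥ ∧ ¬ IsSelfDualFor B ⊤ ∧
      ∀ f : A, ¬ IsSelfDualFor B
        ((Ideal.span {algebraMap R A u ^ j * f}).restrictScalars R) := by
  have hA : ¬ Subsingleton A := fun _ ↦ hB (Subsingleton.elim B 0)
  have hspan : Ideal.span {u} ^ e = ⊥ := by simp [Ideal.span_singleton_pow, hu]
  exact ⟨mt isSelfDualFor_bot_iff.1 hA, mt isSelfDualFor_top_iff.1 hB, fun f h ↦
    hA (h.subsingleton_of_le_pow_smul hspan hej
      (span_singleton_restrictScalars_le_pow_smul_top u j f))⟩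

section DotForm

variable {R : Type*} [CommRing R] {g : R[X]}

/-- The dot product of the coefficient vectors of standard representatives, as a bilinear form on
`R[x]/⟨g⟩` for a monic `g`. -/
def dotForm (hg : g.Monic) : LinearMap.BilinForm R (AdjoinRoot g) :=
  ∑ j ∈ Finset.range g.natDegree,
    LinearMap.BilinForm.linMulLin (lcoeff R j ∘ₗ AdjoinRoot.modByMonicHom hg)
      (lcoeff R j ∘ₗ AdjoinRoot.modByMonicHom hg)

lemma dotForm_apply (hg : g.Monic) (c d : AdjoinRoot g) :
    dotForm hg c d = ∑ j ∈ Finset.range g.natDegree,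
      (AdjoinRoot.modByMonicHom hg c).coeff j * (AdjoinRoot.modByMonicHom hg d).coeff j := by
  simp [dotForm, LinearMap.sum_apply]

lemma dotForm_comm (hg : g.Monic) (c d : AdjoinRoot g) : dotForm hg c d = dotForm hg d c := by
  simp only [dotForm_apply, mul_comm]

lemma dotForm_one_one (hg : g.Monic) (hg1 : g ≠ 1) : dotForm hg 1 1 = 1 := by
  have hone : AdjoinRoot.modByMonicHom hg 1 = 1 := by
    nontriviality R
    rw [← map_one (AdjoinRoot.mk g), AdjoinRoot.modByMonicHom_mk, modByMonic_eq_self_iff hg,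
      degree_one]
    exact hg.degree_pos.2 hg1
  have hdeg : g.natDegree ≠ 0 := mt hg.natDegree_eq_zero.1 hg1
  simp [dotForm_apply, hone, coeff_one, hdeg]

lemma dotForm_ne_zero [Nontrivial R] (hg : g.Monic) (hg1 : g ≠ 1) : dotForm hg ≠ 0 := by
  intro h
  simpa [h] using dotForm_one_one hg hg1

end DotForm

lemma uu_pow_three (m : ℕ) : uu m ^ 3 = 0 := by
  rw [uu, ← AdjoinRoot.mk_X, ← map_pow, AdjoinRoot.mk_self]

instance nontrivial_R3 (m : ℕ) : Nontrivial (R3 m) :=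
  AdjoinRoot.nontrivial _ (by simp)

lemma gR_ne_one (m s : ℕ) : gR m s ≠ 1 := by
  intro h
  have hdeg : 2 ^ s = 0 := by rw [← natDegree_gR m s, h, natDegree_one]
  exact (Nat.two_pow_pos s).ne' hdeg

lemma dotR_eq_dotForm (m s : ℕ) (c d : RR m s) : dotR m s c d = dotForm (gR_monic m s) c d := by
  rw [dotForm_apply, natDegree_gR]
  rfl

lemma isSelfDual_iff_isSelfDualFor (m s : ℕ) (C : Ideal (RR m s)) :
    IsSelfDual m s C ↔ IsSelfDualFor (dotForm (gR_monic m s)) (C.restrictScalars (R3 m)) := by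
  have hdual : dualSet m s (C : Set (RR m s)) =
      ((dotForm (gR_monic m s)).orthogonal (C.restrictScalars (R3 m)) : Set (RR m s)) := by
    ext c
    simp [dualSet, dotR_eq_dotForm, dotForm_comm _ c]
  rw [IsSelfDual, IsSelfDualFor, hdual, eq_comm, ← Submodule.coe_restrictScalars (R3 m) C,
    SetLike.coe_set_eq]

/-- No ideal of Type 1 (`⟨0⟩`, `⟨1⟩`) or Type 2 (`⟨u²(x+1)^τ⟩`) is self-dual. -/
theorem stmt3 (m s : ℕ) (hm : 0 < m) (hs : 0 < s) :
    ¬ IsSelfDual m s (⊥ : Ideal (RR m s)) ∧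
    ¬ IsSelfDual m s (⊤ : Ideal (RR m s)) ∧
    ∀ τ : ℕ, τ ≤ 2 ^ s - 1 →
      ¬ IsSelfDual m s (Ideal.span {uR m s ^ 2 * (xR m s + 1) ^ τ}) := by
  obtain ⟨hbot, htop, hspan⟩ :=
    stmt3_general (dotForm_ne_zero (gR_monic m s) (gR_ne_one m s)) (uu_pow_three m)
      (by norm_num : 3 < 2 * 2)
  simp only [isSelfDual_iff_isSelfDualFor]
  exact ⟨hbot, htop, fun τ _ ↦ hspan ((xR m s + 1) ^ τ)⟩
end
end

section
/- Let 1 ≤ a ≤ 2^s − 1, let h(x) = Σ_{j=0}^{2^s−a−1} h_j (x+1)^j ∈ 𝓚 with h_j ∈ F, let h₃(x) ∈ 𝓚 be either 0 or a unit, let 0 ≤ t₃ < 2^s − a, and let C = ⟨(x+1)^a + u² h(x), u(x+1)^{2^{s-1}} + u²(x+1)^{t₃} h₃(x), u²(x+1)^{2^s−a}⟩ be an ideal of 𝓡 with Tor_0(C) = ⟨(x+1)^a⟩, Tor_1(C) = ⟨(x+1)^{2^{s-1}}⟩ and Tor_2(C) = ⟨(x+1)^{2^s−a}⟩. Then C is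 self-dual if and only if: 2^{s-1} ≤ a ≤ 2^s − 1, h₃ = 0, and for every 0 ≤ ℓ ≤ 2^s − a − 1 one has h_ℓ = Σ_{j=0}^{ℓ} h_j · C(a−j, ℓ−j) in F, where C(n, i) is the binomial coefficient reduced into F (i.e., mod 2). -/
noncomputable section

open Polynomial

/-!
The automorphism `x ↦ x⁻¹` turns the dual of an ideal `C` into the set of all `c` annihilating
the image of `C`, and it only multiplies powers of `y = x + 1` by units. Since
`𝓚 = F[y]/⟨y^(2^s)⟩`, an element of `𝓚` killed by `y^k` is a multiple of `y^(2^s - k)`; hence an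
element orthogonal to the three generators can be reduced to zero by subtracting multiples of them,
one power of `u` at a time, and self-duality means that the generators are pairwise orthogonal.
The first two generators are orthogonal only if `h₃ = 0`. The first is orthogonal to itself only if
`2^s ≤ 2a`, and then exactly when `y^a (h(x) + x^a h(x⁻¹)) = 0`. Here
`x^a (x⁻¹ + 1)^j = (y + 1)^(a - j) y^j`, so comparing coefficients of powers of `y` produces the
binomial coefficients.
-/

/-- The ring `R[x]/⟨xⁿ + 1⟩`, whose ideals are the negacyclic codes of length `n` over `R`. In
characteristic 2 these are the cyclic codes. -/
abbrev NegacyclicRing (R : Type*) [CommRing R] (n : ℕ) : Type _ :=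
  AdjoinRoot (X ^ n + 1 : R[X])

namespace NegacyclicRing

section Duality

variable {R : Type*} [CommRing R] {n : ℕ}

/-- The class of the variable `x`. -/
def x : NegacyclicRing R n := AdjoinRoot.root _

lemma x_pow : (x : NegacyclicRing R n) ^ n = -1 := by
  have h := AdjoinRoot.eval₂_root (X ^ n + 1 : R[X])
  rw [eval₂_add, eval₂_X_pow, eval₂_one] at h
  exact eq_neg_of_add_eq_zero_left h

variable [NeZero n]

lemma monic_X_pow_add_one : (X ^ n + 1 : R[X]).Monic := by
  simpa using monic_X_pow_add_C (1 : R) (NeZero.ne n)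

/-- The inverse of `x`. -/
def xInv : NegacyclicRing R n := -x ^ (n - 1)

lemma x_mul_xInv : (x * xInv : NegacyclicRing R n) = 1 := by
  rw [xInv, mul_neg, mul_pow_sub_one (NeZero.ne n), x_pow, neg_neg]

lemma x_pow_mul_xInv_pow (k : ℕ) : (x ^ k * xInv ^ k : NegacyclicRing R n) = 1 := by
  rw [← mul_pow, x_mul_xInv, one_pow]

lemma isUnit_xInv_pow (k : ℕ) : IsUnit (xInv ^ k : NegacyclicRing R n) :=
  .of_mul_eq_one_right _ (x_pow_mul_xInv_pow k)

/-- The automorphism `c(x) ↦ c(x⁻¹)`, which turns orthogonality to an ideal into annihilation. -/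
def conj : NegacyclicRing R n →ₐ[R] NegacyclicRing R n :=
  AdjoinRoot.liftAlgHom _ (Algebra.ofId R _) xInv <| by
    rw [eval₂_add, eval₂_X_pow, eval₂_one]
    linear_combination xInv ^ n * (x_pow : (x : NegacyclicRing R n) ^ n = -1) -
      x_pow_mul_xInv_pow (R := R) (n := n) n

lemma conj_x : conj (x : NegacyclicRing R n) = xInv :=
  AdjoinRoot.liftAlgHom_root ..

lemma conj_xInv : conj (xInv : NegacyclicRing R n) = x := by
  have h : xInv * conj xInv = (1 : NegacyclicRing R n) := by
    rw [← conj_x, ← map_mul, conj_x, x_mul_xInv, map_one]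
  linear_combination x * h - conj xInv * x_mul_xInv (R := R) (n := n)

lemma conj_conj (c : NegacyclicRing R n) : conj (conj c) = c := by
  have h : (conj.comp conj : NegacyclicRing R n →ₐ[R] NegacyclicRing R n) = AlgHom.id R _ :=
    AdjoinRoot.algHom_ext <| (congrArg conj conj_x).trans conj_xInv
  exact DFunLike.congr_fun h c

lemma mul_conj_eq_zero_comm {c d : NegacyclicRing R n} :
    c * conj d = 0 ↔ d * conj c = 0 := by
  have h : conj (c * conj d) = d * conj c := by rw [map_mul, conj_conj, mul_comm]
  rw [← h, map_eq_zero_iff conj (Function.LeftInverse.injective conj_conj)]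

lemma conj_x_add_one_pow (k : ℕ) :
    conj ((x + 1) ^ k : NegacyclicRing R n) = xInv ^ k * (x + 1) ^ k := by
  have h : xInv + 1 = xInv * (x + 1 : NegacyclicRing R n) := by
    linear_combination -x_mul_xInv (R := R) (n := n)
  rw [map_pow, map_add, conj_x, map_one, h, mul_pow]

lemma mul_conj_mul_x_add_one_pow_eq_zero_iff {c d : NegacyclicRing R n} (hd : conj d = d) (k : ℕ) :
    c * conj (d * (x + 1) ^ k) = 0 ↔ d * (x + 1) ^ k * c = 0 := by
  have h : c * conj (d * (x + 1) ^ k) = xInv ^ k * (d * (x + 1) ^ k * c) := by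
    rw [map_mul, hd, conj_x_add_one_pow]
    ring
  rw [h, (isUnit_xInv_pow k).mul_right_eq_zero]

lemma mul_conj_eq_zero_of_mem_span {S : Set (NegacyclicRing R n)}
    (hS : ∀ p ∈ S, ∀ q ∈ S, p * conj q = 0) {c d : NegacyclicRing R n}
    (hc : c ∈ Ideal.span S) (hd : d ∈ Ideal.span S) : c * conj d = 0 := by
  induction hc, hd using Submodule.span_induction₂ with
  | mem_mem p q hp hq => exact hS p hp q hq
  | zero_left q => exact zero_mul _
  | zero_right p => rw [map_zero, mul_zero]
  | add_left p p' q _ _ _ h h' => rw [add_mul, h, h', add_zero]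
  | add_right p q q' _ _ _ h h' => rw [map_add, mul_add, h, h', add_zero]
  | smul_left r p q _ _ h => rw [smul_eq_mul, mul_assoc, h, mul_zero]
  | smul_right r p q _ _ h => rw [smul_eq_mul, map_mul, mul_left_comm, h, mul_zero]

/-- The `j`-th coefficient of the representative of degree less than `n`. -/
def coeff (j : ℕ) : NegacyclicRing R n →ₗ[R] R :=
  lcoeff R j ∘ₗ AdjoinRoot.modByMonicHom monic_X_pow_add_one

lemma coeff_mk (p : R[X]) (j : ℕ) :
    coeff j (AdjoinRoot.mk (X ^ n + 1) p) = (p %ₘ (X ^ n + 1)).coeff j := by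
  simp [coeff]

/-- The Euclidean dot product of coefficient vectors. -/
def dot (c d : NegacyclicRing R n) : R :=
  ∑ j ∈ Finset.range n, coeff j c * coeff j d

/-- The Euclidean dual of a set of codewords. -/
def dual (S : Set (NegacyclicRing R n)) : Set (NegacyclicRing R n) :=
  {c | ∀ d ∈ S, dot c d = 0}

/-- A code is self-dual if it is equal to its Euclidean dual. -/
def IsSelfDual (C : Ideal (NegacyclicRing R n)) : Prop :=
  (C : Set (NegacyclicRing R n)) = dual C

lemma coeff_x_pow {i : ℕ} (hi : i < n) (j : ℕ) :
    coeff j (x ^ i : NegacyclicRing R n) = if j = i then 1 else 0 := by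
  nontriviality R
  have hdeg : (X ^ i : R[X]).degree < (X ^ n + 1 : R[X]).degree := by
    rw [degree_X_pow, ← C_1, degree_X_pow_add_C (NeZero.pos n)]
    exact_mod_cast hi
  rw [x, ← AdjoinRoot.mk_X, ← map_pow, coeff_mk,
    (modByMonic_eq_self_iff monic_X_pow_add_one).2 hdeg, coeff_X_pow]

lemma sum_coeff_smul_x_pow (c : NegacyclicRing R n) :
    ∑ j ∈ Finset.range n, coeff j c • x ^ j = c := by
  nontriviality R using Module.subsingleton R (NegacyclicRing R n)
  obtain ⟨p, rfl⟩ := AdjoinRoot.mk_surjective c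
  have hdeg : (p %ₘ (X ^ n + 1)).natDegree < n := by
    have hnat : (X ^ n + 1 : R[X]).natDegree = n := by
      rw [← C_1, natDegree_X_pow_add_C]
    have hne : (X ^ n + 1 : R[X]) ≠ 1 := fun h => NeZero.ne n (by rw [← hnat, h, natDegree_one])
    exact (natDegree_modByMonic_lt p monic_X_pow_add_one hne).trans_eq hnat
  calc ∑ j ∈ Finset.range n, coeff j (AdjoinRoot.mk (X ^ n + 1) p) • x ^ j
      = AdjoinRoot.mk _ (p %ₘ (X ^ n + 1)) := by
        rw [as_sum_range_C_mul_X_pow' _ hdeg, map_sum]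
        refine Finset.sum_congr rfl fun j _ => ?_
        rw [coeff_mk, map_mul, map_pow, AdjoinRoot.mk_X, AdjoinRoot.mk_C, Algebra.smul_def, x,
          AdjoinRoot.algebraMap_eq]
    _ = AdjoinRoot.mk _ p := by
        rw [← AdjoinRoot.modByMonicHom_mk monic_X_pow_add_one]
        exact AdjoinRoot.mk_leftInverse monic_X_pow_add_one _

lemma eq_zero_of_coeff_eq_zero {c : NegacyclicRing R n} (h : ∀ j < n, coeff j c = 0) : c = 0 := by
  rw [← sum_coeff_smul_x_pow c]
  exact Finset.sum_eq_zero fun j hj => by rw [h j (Finset.mem_range.1 hj), zero_smul]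

lemma coeff_zero_x_pow_mul_xInv_pow {i j : ℕ} (hi : i < n) (hj : j < n) :
    coeff 0 (x ^ i * xInv ^ j : NegacyclicRing R n) = if i = j then 1 else 0 := by
  rcases le_or_gt j i with hji | hij
  · have h : (x ^ i * xInv ^ j : NegacyclicRing R n) = x ^ (i - j) := by
      rw [← Nat.sub_add_cancel hji, pow_add, mul_assoc, x_pow_mul_xInv_pow, mul_one,
        Nat.add_sub_cancel]
    rw [h, coeff_x_pow (by lia)]
    exact if_congr (by lia) rfl rfl
  · have h : (x ^ i * xInv ^ j : NegacyclicRing R n) = -x ^ (n + i - j) := by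
      have hx : (x ^ i : NegacyclicRing R n) = -x ^ (n + i - j) * x ^ j := by
        rw [neg_mul, ← pow_add, Nat.sub_add_cancel (by lia), pow_add, x_pow, neg_one_mul, neg_neg]
      rw [hx, mul_assoc, x_pow_mul_xInv_pow, mul_one]
    rw [h, map_neg, coeff_x_pow (by lia), if_neg (by lia), if_neg (by lia), neg_zero]

lemma coeff_zero_mul_xInv_pow (c : NegacyclicRing R n) {j : ℕ} (hj : j < n) :
    coeff 0 (c * xInv ^ j) = coeff j c := by
  conv_lhs => rw [← sum_coeff_smul_x_pow c, Finset.sum_mul, map_sum]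
  rw [Finset.sum_eq_single_of_mem j (Finset.mem_range.2 hj)]
  · rw [smul_mul_assoc, map_smul, coeff_zero_x_pow_mul_xInv_pow hj hj, if_pos rfl, smul_eq_mul,
      mul_one]
  · intro i hi hij
    rw [smul_mul_assoc, map_smul, coeff_zero_x_pow_mul_xInv_pow (Finset.mem_range.1 hi) hj,
      if_neg hij, smul_zero]

lemma dot_eq_coeff_zero (c d : NegacyclicRing R n) : dot c d = coeff 0 (c * conj d) := by
  conv_rhs => rw [← sum_coeff_smul_x_pow d, map_sum, Finset.mul_sum, map_sum]
  refine Finset.sum_congr rfl fun j hj => ?_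
  rw [map_smul, map_pow, conj_x, mul_smul_comm, map_smul,
    coeff_zero_mul_xInv_pow c (Finset.mem_range.1 hj), smul_eq_mul, mul_comm]

lemma mem_dual_ideal_iff {C : Ideal (NegacyclicRing R n)} {c : NegacyclicRing R n} :
    c ∈ dual (C : Set (NegacyclicRing R n)) ↔ ∀ d ∈ C, c * conj d = 0 := by
  refine ⟨fun hc d hd => eq_zero_of_coeff_eq_zero fun j hj => ?_, fun hc d hd => ?_⟩
  · calc coeff j (c * conj d) = coeff 0 (c * conj d * xInv ^ j) :=
          (coeff_zero_mul_xInv_pow _ hj).symm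
      _ = dot c (x ^ j * d) := by
          rw [dot_eq_coeff_zero, map_mul conj, map_pow conj, conj_x, mul_comm (xInv ^ j), mul_assoc]
      _ = 0 := hc _ (C.mul_mem_left _ hd)
  · rw [dot_eq_coeff_zero, hc d hd, map_zero]

lemma isSelfDual_iff {C : Ideal (NegacyclicRing R n)} :
    IsSelfDual C ↔ ∀ c, c ∈ C ↔ ∀ d ∈ C, c * conj d = 0 := by
  simp only [IsSelfDual, Set.ext_iff, mem_dual_ideal_iff, SetLike.mem_coe]

end Duality

section BaseChange

variable {R S : Type*} [CommRing R] [CommRing S] [Algebra R S] {n : ℕ}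

/-- The extension of scalars `R[x]/⟨xⁿ + 1⟩ → S[x]/⟨xⁿ + 1⟩`. -/
def baseChange : NegacyclicRing R n →ₐ[R] NegacyclicRing S n :=
  AdjoinRoot.mapAlgHom (Algebra.ofId R S) _ _ (by simp)

lemma baseChange_x : baseChange (x : NegacyclicRing R n) = (x : NegacyclicRing S n) := by
  rw [baseChange, x, AdjoinRoot.coe_mapAlgHom, AdjoinRoot.map_root, x]

lemma baseChange_x_add_one_pow (k : ℕ) :
    (baseChange ((x + 1) ^ k : NegacyclicRing R n) : NegacyclicRing S n) = (x + 1) ^ k := by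
  rw [map_pow, map_add, baseChange_x, map_one]

variable [NeZero n]

lemma conj_baseChange (c : NegacyclicRing R n) :
    conj (baseChange c : NegacyclicRing S n) = baseChange (conj c) := by
  have h : (conj.restrictScalars R).comp baseChange =
      (baseChange : NegacyclicRing R n →ₐ[R] NegacyclicRing S n).comp conj :=
    AdjoinRoot.algHom_ext <| by
      change conj (baseChange (x : NegacyclicRing R n)) = baseChange (conj x)
      rw [baseChange_x, conj_x, conj_x, xInv, xInv, map_neg, map_pow, baseChange_x]
  exact DFunLike.congr_fun h c

lemma coeff_baseChange (c : NegacyclicRing R n) (j : ℕ) :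
    coeff j (baseChange c : NegacyclicRing S n) = algebraMap R S (coeff j c) := by
  obtain ⟨p, rfl⟩ := AdjoinRoot.mk_surjective c
  have h : (baseChange (AdjoinRoot.mk _ p) : NegacyclicRing S n) =
      AdjoinRoot.mk _ (p.map (algebraMap R S)) := by
    rw [← AdjoinRoot.aeval_eq, ← aeval_algHom_apply, ← AdjoinRoot.aeval_eq, aeval_map_algebraMap]
    exact congrArg (aeval · p) baseChange_x
  rw [h, coeff_mk, coeff_mk, ← coeff_map, map_modByMonic _ monic_X_pow_add_one, Polynomial.map_add,
    Polynomial.map_pow, map_X, Polynomial.map_one]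

end BaseChange

/-- The chain ring `F[u]/⟨u³⟩`. -/
abbrev R₃ (F : Type*) [CommRing F] : Type _ := AdjoinRoot (X ^ 3 : F[X])

section ChainRing

variable {F : Type*} [CommRing F] {n : ℕ}

/-- The class of `u` in `(F[u]/⟨u³⟩)[x]/⟨xⁿ + 1⟩`. -/
def u : NegacyclicRing (R₃ F) n := algebraMap (R₃ F) _ (AdjoinRoot.root _)

lemma u_pow_three : (u : NegacyclicRing (R₃ F) n) ^ 3 = 0 := by
  have h := AdjoinRoot.eval₂_root (X ^ 3 : F[X])
  rw [eval₂_X_pow] at h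
  rw [u, ← map_pow, h, map_zero]

variable [NeZero n]

lemma conj_u : conj (u : NegacyclicRing (R₃ F) n) = u :=
  conj.commutes _

lemma conj_u_sq : conj (u ^ 2 : NegacyclicRing (R₃ F) n) = u ^ 2 := by
  rw [map_pow, conj_u]

lemma exists_eq_baseChange_add_u_mul (c : NegacyclicRing (R₃ F) n) :
    ∃ (c₀ : NegacyclicRing F n) (c' : NegacyclicRing (R₃ F) n), c = baseChange c₀ + u * c' := by
  have hR₃ : ∀ r : R₃ F, ∃ (r₀ : F) (r' : R₃ F),
      r = algebraMap F (R₃ F) r₀ + AdjoinRoot.root _ * r' := by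
    intro r
    obtain ⟨p, rfl⟩ := AdjoinRoot.mk_surjective r
    refine ⟨p.coeff 0, AdjoinRoot.mk _ p.divX, ?_⟩
    conv_lhs => rw [← divX_mul_X_add p, map_add, map_mul, AdjoinRoot.mk_X, AdjoinRoot.mk_C]
    rw [AdjoinRoot.algebraMap_eq, add_comm, mul_comm]
  choose r₀ r' hr using hR₃
  refine ⟨∑ j ∈ Finset.range n, r₀ (coeff j c) • x ^ j,
    ∑ j ∈ Finset.range n, r' (coeff j c) • x ^ j, ?_⟩
  conv_lhs => rw [← sum_coeff_smul_x_pow c]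
  rw [map_sum, Finset.mul_sum, ← Finset.sum_add_distrib]
  refine Finset.sum_congr rfl fun j _ => ?_
  conv_lhs => rw [hr (coeff j c), add_smul, mul_smul]
  rw [map_smul, map_pow, baseChange_x, algebraMap_smul, u, ← Algebra.smul_def]

lemma u_sq_mul_baseChange_eq_zero_iff {c : NegacyclicRing F n} :
    (u ^ 2 * baseChange c : NegacyclicRing (R₃ F) n) = 0 ↔ c = 0 := by
  refine ⟨fun h => eq_zero_of_coeff_eq_zero fun j _ => ?_, fun h => by rw [h, map_zero, mul_zero]⟩
  have hj : AdjoinRoot.mk (X ^ 3 : F[X]) (X ^ 2 * C (coeff j c)) = 0 := by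
    have hcoeff := congrArg (coeff j) h
    rwa [u, ← map_pow, ← Algebra.smul_def, map_smul, coeff_baseChange, map_zero] at hcoeff
  rw [AdjoinRoot.mk_eq_zero, X_pow_dvd_iff] at hj
  simpa using hj 2 (by norm_num)

end ChainRing

section CharTwo

variable {F : Type*} [CommRing F] {s : ℕ}

lemma aeval_x_add_one_surjective {n : ℕ} :
    Function.Surjective (aeval (x + 1 : NegacyclicRing F n) : F[X] → _) := by
  intro c
  obtain ⟨p, rfl⟩ := AdjoinRoot.mk_surjective c
  refine ⟨p.comp (X - 1), ?_⟩
  rw [aeval_comp, map_sub, aeval_X, map_one, add_sub_cancel_right, x, AdjoinRoot.aeval_eq]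

lemma coeff_sum_C_mul_X_add_one_pow_mul_X_pow {a N l : ℕ} (hl : l < N) (h : ℕ → F) :
    (∑ j ∈ Finset.range N, C (h j) * ((X + 1) ^ (a - j) * X ^ j)).coeff l =
      ∑ j ∈ Finset.range (l + 1), h j * ((a - j).choose (l - j) : F) := by
  rw [finsetSum_coeff]
  symm
  refine Finset.sum_subset_zero_on_sdiff (by grind) (fun j hj => ?_) fun j hj => ?_
  · rw [coeff_C_mul, coeff_mul_X_pow', if_neg (by grind), mul_zero]
  · rw [coeff_C_mul, coeff_mul_X_pow', if_pos (by grind), coeff_X_add_one_pow]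

variable [CharP F 2]

lemma aeval_x_add_one_eq_zero_iff {p : F[X]} :
    aeval (x + 1 : NegacyclicRing F (2 ^ s)) p = 0 ↔ X ^ 2 ^ s ∣ p := by
  have hcomp (q : F[X]) : q.comp (X + 1) = taylorEquiv 1 q := by
    change _ = taylor 1 q
    rw [taylor_apply, C_1]
  have hmod : (X ^ 2 ^ s + 1 : F[X]) = (X ^ 2 ^ s : F[X]).comp (X + 1) := by
    rw [X_pow_comp, add_pow_char_pow, one_pow]
  have hp : aeval (x + 1 : NegacyclicRing F (2 ^ s)) p =
      AdjoinRoot.mk (X ^ 2 ^ s + 1) (p.comp (X + 1)) := by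
    rw [← AdjoinRoot.aeval_eq, aeval_comp, map_add, aeval_X, map_one, x]
  rw [hp, AdjoinRoot.mk_eq_zero, hmod, hcomp, hcomp, map_dvd_iff]

lemma x_add_one_pow_eq_zero_iff {k : ℕ} :
    (x + 1 : NegacyclicRing F (2 ^ s)) ^ k = 0 ↔ 2 ^ s ≤ k := by
  have : Nontrivial F := CharP.nontrivial_of_char_ne_one (v := 2) (by decide)
  have h : (x + 1 : NegacyclicRing F (2 ^ s)) ^ k = aeval (x + 1) (X ^ k : F[X]) := by
    rw [aeval_X_pow]
  rw [h, aeval_x_add_one_eq_zero_iff, X_pow_dvd_iff]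
  simp only [coeff_X_pow]
  grind

lemma x_add_one_pow_dvd_of_mul_eq_zero {k : ℕ} (hk : k ≤ 2 ^ s) {c : NegacyclicRing F (2 ^ s)}
    (h : c * (x + 1) ^ k = 0) : (x + 1) ^ (2 ^ s - k) ∣ c := by
  obtain ⟨p, rfl⟩ := aeval_x_add_one_surjective c
  have hp : (X ^ (2 ^ s - k) * X ^ k : F[X]) ∣ p * X ^ k := by
    rwa [← pow_add, Nat.sub_add_cancel hk, ← aeval_x_add_one_eq_zero_iff, map_mul, aeval_X_pow]
  rw [dvd_cancel_right_mem_nonZeroDivisors (monic_X_pow k).mem_nonZeroDivisors] at hp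
  simpa only [aeval_X_pow] using map_dvd (aeval (x + 1 : NegacyclicRing F (2 ^ s))) hp

lemma x_pow_mul_conj_sum {a N : ℕ} (hN : N ≤ a + 1) (h : ℕ → F) :
    x ^ a * conj (∑ j ∈ Finset.range N,
      algebraMap F (NegacyclicRing F (2 ^ s)) (h j) * (x + 1) ^ j) =
    aeval (x + 1) (∑ j ∈ Finset.range N, C (h j) * ((X + 1) ^ (a - j) * X ^ j)) := by
  have hx : aeval (x + 1 : NegacyclicRing F (2 ^ s)) (X + 1 : F[X]) = x := by
    have hX : (X + 1 : F[X]) = X - 1 := (CharTwo.sub_eq_add X 1).symm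
    rw [hX, map_sub, aeval_X, map_one, add_sub_cancel_right]
  rw [map_sum, map_sum, Finset.mul_sum]
  refine Finset.sum_congr rfl fun j hj => ?_
  have hja : j ≤ a := Nat.le_of_lt_succ ((Finset.mem_range.1 hj).trans_le hN)
  have hxa : (x ^ a : NegacyclicRing F (2 ^ s)) = x ^ (a - j) * x ^ j := by
    rw [← pow_add, Nat.sub_add_cancel hja]
  rw [map_mul, AlgHom.commutes, conj_x_add_one_pow, hxa, map_mul, aeval_C, map_mul, map_pow, hx,
    aeval_X_pow]
  linear_combination x ^ (a - j) * algebraMap F _ (h j) * (x + 1) ^ j *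
    x_pow_mul_xInv_pow (R := F) (n := 2 ^ s) j

lemma x_add_one_pow_mul_add_conj_eq_zero_iff {a : ℕ} (ha : a ≤ 2 ^ s) (ha' : 2 ^ s ≤ a + a)
    (h : ℕ → F) {k : NegacyclicRing F (2 ^ s)}
    (hk : k = ∑ j ∈ Finset.range (2 ^ s - a), algebraMap F _ (h j) * (x + 1) ^ j) :
    (x + 1) ^ a * (k + x ^ a * conj k) = 0 ↔ ∀ l < 2 ^ s - a,
      h l = ∑ j ∈ Finset.range (l + 1), h j * ((a - j).choose (l - j) : F) := by
  set p : F[X] := ∑ j ∈ Finset.range (2 ^ s - a), C (h j) * X ^ j with hp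
  set q : F[X] := ∑ j ∈ Finset.range (2 ^ s - a), C (h j) * ((X + 1) ^ (a - j) * X ^ j) with hq
  have hkp : k = aeval (x + 1) p := by
    simp only [hk, hp, map_sum, map_mul, aeval_C, aeval_X_pow]
  have hkq : x ^ a * conj k = aeval (x + 1) q := by
    rw [hk, x_pow_mul_conj_sum (by lia)]
  have hy : (x + 1 : NegacyclicRing F (2 ^ s)) ^ a = aeval (x + 1) (X ^ a : F[X]) :=
    (aeval_X_pow _).symm
  have hX : (X ^ 2 ^ s : F[X]) = X ^ (2 ^ s - a) * X ^ a := by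
    rw [← pow_add, Nat.sub_add_cancel ha]
  rw [hkq, hkp, hy, ← map_add, ← map_mul, aeval_x_add_one_eq_zero_iff, hX, mul_comm,
    dvd_cancel_left_mem_nonZeroDivisors (monic_X_pow a).mem_nonZeroDivisors, X_pow_dvd_iff]
  refine forall₂_congr fun l hl => ?_
  have hpl : p.coeff l = h l := by
    simp [hp, coeff_X_pow, hl]
  rw [coeff_add, hpl, hq, coeff_sum_C_mul_X_add_one_pow_mul_X_pow hl, CharTwo.add_eq_zero]

end CharTwo

section SelfDuality

variable {F : Type*} [CommRing F] [CharP F 2] {s : ℕ}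

lemma x_add_one_pow_eq_zero_of_le {k : ℕ} (hk : 2 ^ s ≤ k) :
    (x + 1 : NegacyclicRing (R₃ F) (2 ^ s)) ^ k = 0 := by
  rw [← baseChange_x_add_one_pow (R := F), x_add_one_pow_eq_zero_iff.2 hk, map_zero]

lemma exists_eq_add_u_mul_of_mul_conj_eq_zero {k : ℕ} (hk : k ≤ 2 ^ s)
    {c : NegacyclicRing (R₃ F) (2 ^ s)} (h : c * conj (u ^ 2 * (x + 1) ^ k) = 0) :
    ∃ d e, c = (x + 1) ^ (2 ^ s - k) * d + u * e := by
  obtain ⟨c₀, c', rfl⟩ := exists_eq_baseChange_add_u_mul c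
  have h₀ : (u ^ 2 * baseChange (c₀ * (x + 1) ^ k) : NegacyclicRing (R₃ F) (2 ^ s)) = 0 := by
    rw [mul_conj_mul_x_add_one_pow_eq_zero_iff conj_u_sq] at h
    rw [map_mul, baseChange_x_add_one_pow]
    linear_combination h - c' * (x + 1) ^ k * u_pow_three (F := F) (n := 2 ^ s)
  obtain ⟨d, rfl⟩ := x_add_one_pow_dvd_of_mul_eq_zero hk (u_sq_mul_baseChange_eq_zero_iff.1 h₀)
  exact ⟨baseChange d, c', by rw [map_mul, baseChange_x_add_one_pow]⟩

lemma mul_conj_self_eq_zero_iff {a : ℕ} (ha : 2 ^ s ≤ a + a) {k : NegacyclicRing F (2 ^ s)} :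
    ((x + 1) ^ a + u ^ 2 * baseChange k : NegacyclicRing (R₃ F) (2 ^ s)) *
      conj ((x + 1) ^ a + u ^ 2 * baseChange k) = 0 ↔ (x + 1) ^ a * (k + x ^ a * conj k) = 0 := by
  have hy := x_add_one_pow_eq_zero_of_le (F := F) ha
  have h : ((x + 1) ^ a + u ^ 2 * baseChange k : NegacyclicRing (R₃ F) (2 ^ s)) *
      conj ((x + 1) ^ a + u ^ 2 * baseChange k) =
      xInv ^ a * (u ^ 2 * baseChange ((x + 1) ^ a * (k + x ^ a * conj k))) := by
    rw [map_mul baseChange, baseChange_x_add_one_pow, map_add baseChange, map_mul baseChange,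
      map_pow baseChange, baseChange_x, ← conj_baseChange, map_add conj, conj_x_add_one_pow,
      map_mul conj, conj_u_sq]
    linear_combination xInv ^ a * hy -
      u ^ 2 * (x + 1) ^ a * conj (baseChange k) * x_pow_mul_xInv_pow (R := R₃ F) (n := 2 ^ s) a +
      u * baseChange k * conj (baseChange k) * u_pow_three (F := F) (n := 2 ^ s)
  rw [h, (isUnit_xInv_pow a).mul_right_eq_zero, u_sq_mul_baseChange_eq_zero_iff]

lemma mem_of_forall_mul_conj_eq_zero {a b : ℕ} (ha : a ≤ 2 ^ s) (hb : b + b = 2 ^ s)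
    {k : NegacyclicRing F (2 ^ s)} {C : Ideal (NegacyclicRing (R₃ F) (2 ^ s))}
    (h₀ : (x + 1) ^ a + u ^ 2 * baseChange k ∈ C) (h₁ : u * (x + 1) ^ b ∈ C)
    (h₂ : u ^ 2 * (x + 1) ^ (2 ^ s - a) ∈ C) (hC : ∀ c ∈ C, ∀ d ∈ C, c * conj d = 0)
    {c : NegacyclicRing (R₃ F) (2 ^ s)} (hc : ∀ d ∈ C, c * conj d = 0) : c ∈ C := by
  have orth_sub (e f) (he : e ∈ C) (hf : ∀ d ∈ C, f * conj d = 0) :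
      ∀ d ∈ C, (f - e) * conj d = 0 := fun d hd => by rw [sub_mul, hf d hd, hC e he d hd, sub_zero]
  obtain ⟨d, e, hc_eq⟩ := exists_eq_add_u_mul_of_mul_conj_eq_zero (Nat.sub_le _ _) (hc _ h₂)
  rw [Nat.sub_sub_self ha] at hc_eq
  have hc₁ := orth_sub _ _ (C.mul_mem_left d h₀) hc
  obtain ⟨d₁, e₁, he_eq⟩ := exists_eq_add_u_mul_of_mul_conj_eq_zero (k := b) (by lia)
      (c := e - u * d * baseChange k) <| by
    have h := (mul_conj_mul_x_add_one_pow_eq_zero_iff conj_u b).1 (hc₁ _ h₁)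
    rw [mul_conj_mul_x_add_one_pow_eq_zero_iff conj_u_sq]
    linear_combination h - u * (x + 1) ^ b * hc_eq
  rw [show 2 ^ s - b = b by lia] at he_eq
  have hc₂ := orth_sub _ _ (C.mul_mem_left d₁ h₁) hc₁
  obtain ⟨d₂, e₂, he₁_eq⟩ := exists_eq_add_u_mul_of_mul_conj_eq_zero (c := e₁) ha <| by
    have h := hc₂ _ h₀
    rw [map_add, map_mul, conj_u_sq] at h
    rw [map_mul, conj_u_sq]
    linear_combination h - (conj ((x + 1) ^ a) + u ^ 2 * conj (baseChange k)) *
      (hc_eq + u * he_eq) - u * e₁ * conj (baseChange k) * u_pow_three (F := F) (n := 2 ^ s)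
  have hc_sum : c = d * ((x + 1) ^ a + u ^ 2 * baseChange k) + d₁ * (u * (x + 1) ^ b) +
      d₂ * (u ^ 2 * (x + 1) ^ (2 ^ s - a)) := by
    linear_combination hc_eq + u * he_eq + u ^ 2 * he₁_eq + e₂ * u_pow_three (F := F) (n := 2 ^ s)
  rw [hc_sum]
  exact C.add_mem (C.add_mem (C.mul_mem_left _ h₀) (C.mul_mem_left _ h₁)) (C.mul_mem_left _ h₂)

lemma mul_conj_eq_zero_of_mem_span_generators {a b : ℕ} (ha : a ≤ 2 ^ s) (hb : b + b = 2 ^ s)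
    (hba : b ≤ a) {k : NegacyclicRing F (2 ^ s)}
    (hk : ((x + 1) ^ a + u ^ 2 * baseChange k : NegacyclicRing (R₃ F) (2 ^ s)) *
      conj ((x + 1) ^ a + u ^ 2 * baseChange k) = 0)
    {c d : NegacyclicRing (R₃ F) (2 ^ s)}
    (hc : c ∈ Ideal.span {(x + 1) ^ a + u ^ 2 * baseChange k, u * (x + 1) ^ b,
      u ^ 2 * (x + 1) ^ (2 ^ s - a)})
    (hd : d ∈ Ideal.span {(x + 1) ^ a + u ^ 2 * baseChange k, u * (x + 1) ^ b,
      u ^ 2 * (x + 1) ^ (2 ^ s - a)}) : c * conj d = 0 := by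
  have hu := u_pow_three (F := F) (n := 2 ^ s)
  have hab := x_add_one_pow_eq_zero_of_le (F := F) (s := s) (k := a + b) (by lia)
  have hbb := x_add_one_pow_eq_zero_of_le (F := F) hb.ge
  have haa := x_add_one_pow_eq_zero_of_le (F := F) (Nat.add_sub_cancel' ha).ge
  rw [pow_add] at hab hbb haa
  have orth₁ {c' : NegacyclicRing (R₃ F) (2 ^ s)} (h : u * (x + 1) ^ b * c' = 0) :
      c' * conj (u * (x + 1) ^ b) = 0 := (mul_conj_mul_x_add_one_pow_eq_zero_iff conj_u b).2 h
  have orth₂ {c' : NegacyclicRing (R₃ F) (2 ^ s)} (h : u ^ 2 * (x + 1) ^ (2 ^ s - a) * c' = 0) :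
      c' * conj (u ^ 2 * (x + 1) ^ (2 ^ s - a)) = 0 :=
    (mul_conj_mul_x_add_one_pow_eq_zero_iff conj_u_sq _).2 h
  have h₀₁ := orth₁ (c' := (x + 1) ^ a + u ^ 2 * baseChange k) <| by
    linear_combination u * hab + (x + 1) ^ b * baseChange k * hu
  have h₀₂ := orth₂ (c' := (x + 1) ^ a + u ^ 2 * baseChange k) <| by
    linear_combination u ^ 2 * haa + u * (x + 1) ^ (2 ^ s - a) * baseChange k * hu
  have h₁₁ := orth₁ (c' := u * (x + 1) ^ b) <| by
    linear_combination u ^ 2 * hbb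
  have h₁₂ := orth₂ (c' := u * (x + 1) ^ b) <| by
    linear_combination (x + 1) ^ (2 ^ s - a) * (x + 1) ^ b * hu
  have h₂₂ := orth₂ (c' := u ^ 2 * (x + 1) ^ (2 ^ s - a)) <| by
    linear_combination u * (x + 1) ^ (2 ^ s - a) * (x + 1) ^ (2 ^ s - a) * hu
  refine mul_conj_eq_zero_of_mem_span ?_ hc hd
  rintro p (rfl | rfl | rfl) q (rfl | rfl | rfl)
  exacts [hk, h₀₁, h₀₂, mul_conj_eq_zero_comm.1 h₀₁, h₁₁, h₁₂, mul_conj_eq_zero_comm.1 h₀₂,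
    mul_conj_eq_zero_comm.1 h₁₂, h₂₂]

lemma isSelfDual_span_iff {a b : ℕ} (ha : a ≤ 2 ^ s) (hb : b + b = 2 ^ s) (hba : b ≤ a)
    {k : NegacyclicRing F (2 ^ s)} :
    IsSelfDual (Ideal.span {(x + 1) ^ a + u ^ 2 * baseChange k, u * (x + 1) ^ b,
      u ^ 2 * (x + 1) ^ (2 ^ s - a)} : Ideal (NegacyclicRing (R₃ F) (2 ^ s))) ↔
    (x + 1) ^ a * (k + x ^ a * conj k) = 0 := by
  rw [isSelfDual_iff, ← mul_conj_self_eq_zero_iff (by lia)]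
  refine ⟨fun hC => ?_, fun hk c => ?_⟩
  · exact (hC _).1 (Ideal.subset_span (.inl rfl)) _ (Ideal.subset_span (.inl rfl))
  · exact ⟨fun hc _ hd => mul_conj_eq_zero_of_mem_span_generators ha hb hba hk hc hd,
      mem_of_forall_mul_conj_eq_zero ha hb (Ideal.subset_span (.inl rfl))
        (Ideal.subset_span (.inr (.inl rfl))) (Ideal.subset_span (.inr (.inr rfl)))
        fun _ hc _ hd => mul_conj_eq_zero_of_mem_span_generators ha hb hba hk hc hd⟩

lemma le_add_self_of_mul_conj_self_eq_zero {a : ℕ} {k : NegacyclicRing F (2 ^ s)}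
    (h : ((x + 1) ^ a + u ^ 2 * baseChange k : NegacyclicRing (R₃ F) (2 ^ s)) *
      conj ((x + 1) ^ a + u ^ 2 * baseChange k) = 0) : 2 ^ s ≤ a + a := by
  rw [← x_add_one_pow_eq_zero_iff (F := F), ← u_sq_mul_baseChange_eq_zero_iff,
    ← (isUnit_xInv_pow a).mul_right_eq_zero, baseChange_x_add_one_pow]
  rw [map_add, map_mul, conj_u_sq, conj_x_add_one_pow] at h
  linear_combination u ^ 2 * h - (u * (x + 1) ^ a * conj (baseChange k) +
    u * baseChange k * xInv ^ a * (x + 1) ^ a + u ^ 3 * baseChange k * conj (baseChange k)) *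
    u_pow_three (F := F) (n := 2 ^ s)

lemma x_add_one_pow_mul_eq_zero_of_mul_conj_eq_zero {a b t : ℕ} (hab : 2 ^ s ≤ a + b)
    {k k' : NegacyclicRing F (2 ^ s)}
    (h : (u * (x + 1) ^ b + u ^ 2 * (x + 1) ^ t * baseChange k' :
      NegacyclicRing (R₃ F) (2 ^ s)) * conj ((x + 1) ^ a + u ^ 2 * baseChange k) = 0) :
    (x + 1) ^ (a + t) * k' = 0 := by
  rw [← u_sq_mul_baseChange_eq_zero_iff, ← (isUnit_xInv_pow a).mul_right_eq_zero, map_mul,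
    baseChange_x_add_one_pow]
  rw [map_add, map_mul, conj_u_sq, conj_x_add_one_pow] at h
  linear_combination h - u * xInv ^ a * x_add_one_pow_eq_zero_of_le (F := F) hab -
    ((x + 1) ^ b + u * (x + 1) ^ t * baseChange k') * conj (baseChange k) *
    u_pow_three (F := F) (n := 2 ^ s)

lemma le_and_eq_zero_of_isSelfDual {a b t : ℕ} (hb : b + b = 2 ^ s) (ht : t < 2 ^ s - a)
    {k k' : NegacyclicRing F (2 ^ s)} (hk' : k' = 0 ∨ IsUnit k')
    (hC : IsSelfDual (Ideal.span {(x + 1) ^ a + u ^ 2 * baseChange k,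
      u * (x + 1) ^ b + u ^ 2 * (x + 1) ^ t * baseChange k', u ^ 2 * (x + 1) ^ (2 ^ s - a)} :
      Ideal (NegacyclicRing (R₃ F) (2 ^ s)))) : b ≤ a ∧ k' = 0 := by
  rw [isSelfDual_iff] at hC
  have orth₀ := fun c hc => (hC c).1 hc _ (Ideal.subset_span (.inl rfl))
  have haa := le_add_self_of_mul_conj_self_eq_zero (orth₀ _ (Ideal.subset_span (.inl rfl)))
  have hk'_mul := x_add_one_pow_mul_eq_zero_of_mul_conj_eq_zero (by lia)
    (orth₀ _ (Ideal.subset_span (.inr (.inl rfl))))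
  refine ⟨by lia, hk'.resolve_right fun hunit => ?_⟩
  rw [hunit.mul_left_eq_zero, x_add_one_pow_eq_zero_iff] at hk'_mul
  lia

end SelfDuality

end NegacyclicRing

open NegacyclicRing in
theorem stmt8_general {F : Type*} [CommRing F] [CharP F 2] (s a : ℕ) (h : ℕ → F)
    (h₃ : NegacyclicRing F (2 ^ (s + 1))) (hh₃ : h₃ = 0 ∨ IsUnit h₃)
    (t₃ : ℕ) (ht₃ : t₃ < 2 ^ (s + 1) - a) :
    NegacyclicRing.IsSelfDual (Ideal.span
      {(x + 1) ^ a + u ^ 2 * baseChange (∑ j ∈ Finset.range (2 ^ (s + 1) - a),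
          algebraMap F (NegacyclicRing F (2 ^ (s + 1))) (h j) * (x + 1) ^ j),
       u * (x + 1) ^ 2 ^ s + u ^ 2 * (x + 1) ^ t₃ * baseChange h₃,
       u ^ 2 * (x + 1) ^ (2 ^ (s + 1) - a)} : Ideal (NegacyclicRing (R₃ F) (2 ^ (s + 1)))) ↔
    2 ^ s ≤ a ∧ h₃ = 0 ∧ ∀ ℓ < 2 ^ (s + 1) - a,
      h ℓ = ∑ j ∈ Finset.range (ℓ + 1), h j * ((a - j).choose (ℓ - j) : F) := by
  have hs : 2 ^ s + 2 ^ s = 2 ^ (s + 1) := by rw [pow_succ, mul_two]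
  have key (hsa : 2 ^ s ≤ a) := (isSelfDual_span_iff (by lia) hs hsa).trans
    (x_add_one_pow_mul_add_conj_eq_zero_iff (a := a) (by lia) (by lia) h rfl)
  constructor
  · intro hC
    obtain ⟨hsa, rfl⟩ := le_and_eq_zero_of_isSelfDual hs ht₃ hh₃ hC
    rw [map_zero, mul_zero, add_zero] at hC
    exact ⟨hsa, rfl, (key hsa).1 hC⟩
  · rintro ⟨hsa, rfl, hcoeff⟩
    rw [map_zero, mul_zero, add_zero]
    exact (key hsa).2 hcoeff

/-- Self-duality criterion for the codes of Theorem 4 (`h₁ = 0` case). -/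
theorem stmt8 (m s : ℕ) (hm : 0 < m) (hs : 0 < s)
    (a : ℕ) (ha1 : 1 ≤ a) (ha2 : a ≤ 2 ^ s - 1)
    (h : ℕ → Fq m) (hK : KK m s)
    (hKdef : hK = ∑ j ∈ Finset.range (2 ^ s - a),
      algebraMap (Fq m) (KK m s) (h j) * (xK m s + 1) ^ j)
    (h₃ : KK m s) (hh₃ : h₃ = 0 ∨ IsUnit h₃)
    (t₃ : ℕ) (ht₃ : t₃ < 2 ^ s - a)
    (C : Ideal (RR m s))
    (hC : C = Ideal.span
      {(xR m s + 1) ^ a + uR m s ^ 2 * KtoR m s hK,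
       uR m s * (xR m s + 1) ^ (2 ^ (s - 1)) + uR m s ^ 2 * (xR m s + 1) ^ t₃ * KtoR m s h₃,
       uR m s ^ 2 * (xR m s + 1) ^ (2 ^ s - a)})
    (hT0 : TorSet m s (C : Set (RR m s)) 0 =
      ((Ideal.span {(xK m s + 1) ^ a} : Ideal (KK m s)) : Set (KK m s)))
    (hT1 : TorSet m s (C : Set (RR m s)) 1 =
      ((Ideal.span {(xK m s + 1) ^ (2 ^ (s - 1))} : Ideal (KK m s)) : Set (KK m s)))
    (hT2 : TorSet m s (C : Set (RR m s)) 2 =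
      ((Ideal.span {(xK m s + 1) ^ (2 ^ s - a)} : Ideal (KK m s)) : Set (KK m s))) :
    IsSelfDual m s C ↔
      (2 ^ (s - 1) ≤ a ∧ a ≤ 2 ^ s - 1 ∧ h₃ = 0 ∧
        ∀ ℓ < 2 ^ s - a,
          h ℓ = ∑ j ∈ Finset.range (ℓ + 1), h j * ((a - j).choose (ℓ - j) : Fq m)) := by
  obtain ⟨s, rfl⟩ := Nat.exists_eq_succ_of_ne_zero hs.ne'
  subst hKdef hC
  rw [and_iff_right ha2]
  exact stmt8_general s a h h₃ hh₃ t₃ ht₃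
end
end
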